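/- For every M > 0 there exists C > 0 such that sup_{t≥0} ‖u(t)‖_{L^∞} ≤ C for every global-in-time solution (s,u) of problem (P) with initial data (s₀,φ) ∈ W satisfying s₀ + s₀^{−1} + ‖φ‖_{Lip([0,s₀])} ≤ M. -/

import Mathlib

open Set MeasureTheory Filter Topology Real
open scoped ENNReal

noncomputable section

/-- `(s₀, φ)` belongs to the class `W`: `s₀ ∈ (0,∞)`, `φ` is Lipschitz on `[0,s₀]`,
not identically zero, nonnegative there, and vanishes at `s₀`. -/
def memW (s₀ : ℝ) (φ : ℝ → ℝ) : Prop :=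
  0 < s₀ ∧ (∃ K : NNReal, LipschitzOnWith K φ (Icc 0 s₀)) ∧
    (∃ x ∈ Icc 0 s₀, φ x ≠ 0) ∧ (∀ x ∈ Icc 0 s₀, 0 ≤ φ x) ∧ φ s₀ = 0

/-- `(s,u)` is a solution of the one-phase Stefan problem (P) on `(0,T]` (finite `T`)
with exponent `p` and initial data `(s₀,φ)`. -/
structure IsSolOn (p s₀ : ℝ) (φ : ℝ → ℝ) (T : ℝ) (s : ℝ → ℝ) (u : ℝ → ℝ → ℝ) : Prop where
  T_pos : 0 < T
  s_cont : ContinuousOn s (Icc 0 T)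
  s_diff : ∀ t ∈ Ioc 0 T, DifferentiableAt ℝ s t
  s_deriv_cont : ContinuousOn (deriv s) (Ioc 0 T)
  s_pos : ∀ t ∈ Icc 0 T, 0 < s t
  ut_diff : ∀ t ∈ Ioc 0 T, ∀ x ∈ Ioo 0 (s t), DifferentiableAt ℝ (fun τ => u τ x) t
  ux_diff : ∀ t ∈ Ioc 0 T, ∀ x ∈ Ioo 0 (s t), DifferentiableAt ℝ (u t) x
  uxx_diff : ∀ t ∈ Ioc 0 T, ∀ x ∈ Ioo 0 (s t), DifferentiableAt ℝ (deriv (u t)) x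
  ut_cont : ContinuousOn (fun q : ℝ × ℝ => deriv (fun τ => u τ q.2) q.1)
      {q : ℝ × ℝ | q.1 ∈ Ioc 0 T ∧ q.2 ∈ Ioo 0 (s q.1)}
  uxx_cont : ContinuousOn (fun q : ℝ × ℝ => deriv (deriv (u q.1)) q.2)
      {q : ℝ × ℝ | q.1 ∈ Ioc 0 T ∧ q.2 ∈ Ioo 0 (s q.1)}
  ux_cont : ContinuousOn (fun q : ℝ × ℝ => deriv (u q.1) q.2)
      {q : ℝ × ℝ | q.1 ∈ Ioc 0 T ∧ q.2 ∈ Icc 0 (s q.1)}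
  u_cont : ContinuousOn (fun q : ℝ × ℝ => u q.1 q.2)
      {q : ℝ × ℝ | q.1 ∈ Icc 0 T ∧ q.2 ∈ Icc 0 (s q.1)}
  u_nonneg : ∀ t ∈ Icc 0 T, ∀ x ∈ Icc 0 (s t), 0 ≤ u t x
  heat : ∀ t ∈ Ioc 0 T, ∀ x ∈ Ioo 0 (s t),
      deriv (fun τ => u τ x) t = deriv (deriv (u t)) x
  bc_zero : ∀ t ∈ Ioc 0 T, -deriv (u t) 0 = u t 0 ^ p
  bc_free : ∀ t ∈ Ioc 0 T, u t (s t) = 0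
  stefan : ∀ t ∈ Ioc 0 T, deriv s t = -deriv (u t) (s t)
  init : ∀ x ∈ Icc 0 s₀, u 0 x = φ x
  init_s : s 0 = s₀

/-- `(s,u)` is a global-in-time solution of problem (P). -/
def IsGlobalSol (p s₀ : ℝ) (φ : ℝ → ℝ) (s : ℝ → ℝ) (u : ℝ → ℝ → ℝ) : Prop :=
  ∀ T : ℝ, 0 < T → IsSolOn p s₀ φ T s u

/-- `Tm ∈ (0,∞]` is the maximal existence time of the solution `(s,u)` of (P) with
initial data `(s₀,φ)`: the solution exists on `(0,T]` for every `T < Tm`, and for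
`T > Tm` problem (P) admits no solution on `(0,T]`. -/
def IsMaxSol (p s₀ : ℝ) (φ : ℝ → ℝ) (Tm : ℝ≥0∞) (s : ℝ → ℝ) (u : ℝ → ℝ → ℝ) : Prop :=
  0 < Tm ∧
    (∀ T : ℝ, 0 < T → ENNReal.ofReal T < Tm → IsSolOn p s₀ φ T s u) ∧
    (∀ T : ℝ, Tm < ENNReal.ofReal T → ¬∃ σ v, IsSolOn p s₀ φ T σ v)

/-- The sup norm `‖u(t)‖_{L^∞(0,s(t))}`. -/
def supNorm (s : ℝ → ℝ) (u : ℝ → ℝ → ℝ) (t : ℝ) : ℝ :=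
  sSup (u t '' Ioo 0 (s t))

/-- The `L¹` norm `‖u(t)‖_{L¹(0,s(t))}` of the nonnegative function `u(t,·)`. -/
def L1Norm (s : ℝ → ℝ) (u : ℝ → ℝ → ℝ) (t : ℝ) : ℝ :=
  ∫ x in (0:ℝ)..(s t), u t x

/-- The energy `E(s(t),u(t))`. -/
def energy (p : ℝ) (s : ℝ → ℝ) (u : ℝ → ℝ → ℝ) (t : ℝ) : ℝ :=
  1 / 2 * (∫ x in (0:ℝ)..(s t), (deriv (u t) x) ^ 2) - u t 0 ^ (p + 1) / (p + 1)

/-- The Lipschitz norm `‖φ‖_{Lip([0,a])}`. -/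
def lipNorm (a : ℝ) (φ : ℝ → ℝ) : ℝ :=
  sSup ((fun x => |φ x|) '' Icc 0 a) +
    sSup ((fun q : ℝ × ℝ => |φ q.1 - φ q.2| / |q.1 - q.2|) ''
      {q : ℝ × ℝ | q.1 ∈ Icc 0 a ∧ q.2 ∈ Icc 0 a ∧ q.1 ≠ q.2})

structure Strip (p a b : ℝ) (σ : ℝ → ℝ) (U R : ℝ → ℝ → ℝ) : Prop where
  hab : a < b
  hp : 1 < p
  σc : Continuous σ
  σm : Monotone σ
  σp : ∀ t, 0 < σ t
  Uc : Continuous (fun q : ℝ × ℝ => U q.1 q.2)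
  Rc : Continuous (fun q : ℝ × ℝ => R q.1 q.2)
  Un : ∀ t x, 0 ≤ U t x
  Uz : ∀ t x, σ t ≤ x → U t x = 0
  Rb : ∃ C, ∀ t x, |R t x| ≤ C
  Ub : ∃ C, ∀ t x, U t x ≤ C
  Ud : ∀ t ∈ Icc a b, ∀ x ∈ Ioo 0 (σ t), HasDerivAt (U t) (R t x) x
  bc : ∀ t ∈ Icc a b, R t 0 = -(U t 0) ^ p
  rect : ∀ t ∈ Icc a b, ∀ t' ∈ Icc a b, t ≤ t' → ∀ y ∈ Icc 0 (σ t),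
    ∫ x in (0:ℝ)..y, (U t' x - U t x) = ∫ τ in t..t', (R τ y - R τ 0)
  stefan : ∀ t ∈ Icc a b, ∀ t' ∈ Icc a b, t ≤ t' →
    σ t' - σ t = -∫ τ in t..t', R τ (σ τ)

def Gx (σ : ℝ → ℝ) (R : ℝ → ℝ → ℝ) (t x : ℝ) : ℝ := if x ≤ σ t then R t x else 0

def Pf (σ : ℝ → ℝ) (U R : ℝ → ℝ → ℝ) (t t' x : ℝ) : ℝ :=
  (∫ τ in t..t', R τ 0) + (∫ z in (0:ℝ)..x, (U t' z - U t z)) + (min x (σ t') - min x (σ t))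

lemma indicator_ii {f : ℝ → ℝ} (hf : Continuous f) {S : Set ℝ} (hS : MeasurableSet S) (a b : ℝ) :
    IntervalIntegrable (S.indicator f) volume a b := by
  rw [intervalIntegrable_iff]
  exact (intervalIntegrable_iff.1 (hf.intervalIntegrable a b)).indicator hS

namespace Strip
variable {p a b : ℝ} {σ : ℝ → ℝ} {U R : ℝ → ℝ → ℝ}

lemma Uct (S : Strip p a b σ U R) (t : ℝ) : Continuous (U t) :=
  S.Uc.comp (by fun_prop : Continuous fun x : ℝ => (t, x))
lemma Ucx (S : Strip p a b σ U R) (x : ℝ) : Continuous (fun t => U t x) :=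
  S.Uc.comp (by fun_prop : Continuous fun t : ℝ => (t, x))
lemma Rct (S : Strip p a b σ U R) (t : ℝ) : Continuous (R t) :=
  S.Rc.comp (by fun_prop : Continuous fun x : ℝ => (t, x))
lemma Rcx (S : Strip p a b σ U R) (x : ℝ) : Continuous (fun t => R t x) :=
  S.Rc.comp (by fun_prop : Continuous fun t : ℝ => (t, x))
lemma Rcσ (S : Strip p a b σ U R) : Continuous (fun t => R t (σ t)) :=
  S.Rc.comp (by have := S.σc; fun_prop : Continuous fun t : ℝ => (t, σ t))

lemma Gx_eq_t (x : ℝ) : (fun t => Gx σ R t x) = {t | x ≤ σ t}.indicator (fun t => R t x) := by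
  funext t; simp [Gx, indicator]
lemma Gx_eq_x (t : ℝ) : Gx σ R t = {x | x ≤ σ t}.indicator (R t) := by
  funext x; simp [Gx, indicator]

lemma Gx_ii_t (S : Strip p a b σ U R) (x c d : ℝ) :
    IntervalIntegrable (fun t => Gx σ R t x) volume c d := by
  rw [Gx_eq_t]
  exact indicator_ii (S.Rcx x) (isClosed_le continuous_const S.σc).measurableSet c d
lemma Gx_meas_x (S : Strip p a b σ U R) (t : ℝ) : Measurable (Gx σ R t) := by
  rw [Gx_eq_x]
  exact (S.Rct t).measurable.indicator measurableSet_Iic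
lemma Gx_ii_x (S : Strip p a b σ U R) (t c d : ℝ) :
    IntervalIntegrable (Gx σ R t) volume c d := by
  rw [Gx_eq_x]
  exact indicator_ii (S.Rct t) measurableSet_Iic c d

lemma hasDeriv_int {f : ℝ → ℝ} (hf : Continuous f) (a t : ℝ) :
    HasDerivAt (fun y => ∫ τ in a..y, f τ) (f t) t :=
  intervalIntegral.integral_hasDerivAt_right (hf.intervalIntegrable _ _)
    (hf.stronglyMeasurableAtFilter _ _) hf.continuousAt

lemma massDeriv (S : Strip p a b σ U R) {t x : ℝ} (ht : t ∈ Ico a b) (hx : 0 ≤ x) :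
    HasDerivWithinAt (fun τ => (∫ z in (0:ℝ)..x, U τ z) + min x (σ τ))
      (Gx σ R t x - R t 0) (Ioi t) t := by
  have htI : t ∈ Icc a b := ⟨ht.1, ht.2.le⟩
  by_cases hxs : x ≤ σ t
  · have hd : HasDerivWithinAt (fun y => ((∫ z in (0:ℝ)..x, U t z) + x)
        + ∫ τ in t..y, (R τ x - R τ 0)) (Gx σ R t x - R t 0) (Ioi t) t := by
      have := (hasDeriv_int ((S.Rcx x).sub (S.Rcx 0)) t t).hasDerivWithinAt (s := Ioi t)
      simpa [Gx, hxs] using this.const_add ((∫ z in (0:ℝ)..x, U t z) + x)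
    have heq : ∀ y ∈ Icc t b, (∫ z in (0:ℝ)..x, U y z) + min x (σ y) = ((∫ z in (0:ℝ)..x, U t z) + x)
        + ∫ τ in t..y, (R τ x - R τ 0) := by
      intro y hy
      rw [← S.rect t htI y ⟨ht.1.trans hy.1, hy.2⟩ hy.1 x ⟨hx, hxs⟩,
        intervalIntegral.integral_sub ((S.Uct y).intervalIntegrable _ _)
          ((S.Uct t).intervalIntegrable _ _), min_eq_left (hxs.trans (S.σm hy.1))]
      ring
    refine hd.congr_of_eventuallyEq ?_ (heq t ⟨le_rfl, ht.2.le⟩)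
    filter_upwards [Ioc_mem_nhdsGT ht.2] with y hy
    exact heq y ⟨hy.1.le, hy.2⟩
  · push Not at hxs
    obtain ⟨C, hC⟩ := S.Rb
    have hψ : HasDerivWithinAt (fun y => ∫ z in (σ t)..(σ y), U y z) 0 (Ioi t) t := by
      rw [hasDerivWithinAt_iff_isLittleO]
      simp only [intervalIntegral.integral_same, sub_zero, smul_zero]
      rw [Asymptotics.isLittleO_iff]
      intro ε hε
      have hCp : 0 < |C| + 1 := by positivity
      have hcont : ContinuousAt (fun q : ℝ × ℝ => U q.1 q.2) (t, σ t) := S.Uc.continuousAt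
      have hev := Metric.continuousAt_iff.1 hcont (ε / (|C| + 1)) (by positivity)
      obtain ⟨δ, hδ, hd⟩ := hev
      have hσ := Metric.continuousAt_iff.1 (S.σc.continuousAt (x := t)) δ hδ
      obtain ⟨δ', hδ', hd'⟩ := hσ
      filter_upwards [Ioc_mem_nhdsGT ht.2, Ioo_mem_nhdsGT (show t < t + min δ δ' by
        have := lt_min hδ hδ'; linarith)] with y hy hy'
      have hyt : |y - t| < min δ δ' := by rw [abs_of_pos (by linarith [hy.1])]; linarith [hy'.2]
      have hσy : |σ y - σ t| < δ := hd' (by rw [Real.dist_eq]; exact hyt.trans_le (min_le_right _ _))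
      have h1 : ‖∫ z in (σ t)..(σ y), U y z‖ ≤ ε / (|C| + 1) * |σ y - σ t| := by
        apply intervalIntegral.norm_integral_le_of_norm_le_const
        intro z hz
        rw [uIoc_of_le (S.σm hy.1.le)] at hz
        have hb := @hd (y, z) (by
          rw [Prod.dist_eq, Real.dist_eq, Real.dist_eq]
          apply max_lt
          · exact hyt.trans_le (min_le_left _ _)
          · rw [abs_of_pos (by simp; exact hz.1)]
            rw [abs_of_nonneg (by linarith [S.σm hy.1.le])] at hσy
            simp; linarith [hz.2])
        simp only [S.Uz t (σ t) le_rfl, Real.dist_eq, sub_zero] at hb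
        exact hb.le
      have h2 : |σ y - σ t| ≤ |C| * |y - t| := by
        rw [S.stefan t htI y ⟨ht.1.trans hy.1.le, hy.2⟩ hy.1.le, abs_neg]
        rw [← Real.norm_eq_abs]
        refine intervalIntegral.norm_integral_le_of_norm_le_const (fun z _ => ?_)
        exact (hC _ _).trans (le_abs_self C)
      rw [Real.norm_eq_abs (y - t)]
      calc _ ≤ ε / (|C| + 1) * |σ y - σ t| := h1
        _ ≤ ε / (|C| + 1) * ((|C| + 1) * |y - t|) := by
            gcongr; exact h2.trans (by gcongr; linarith)
        _ = ε * |y - t| := by field_simp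
    have hd : HasDerivWithinAt (fun y => ((∫ z in (0:ℝ)..x, U t z) + σ t)
        + ((∫ τ in t..y, (R τ (σ t) - R τ 0 - R τ (σ τ))) + ∫ z in (σ t)..(σ y), U y z))
        (Gx σ R t x - R t 0) (Ioi t) t := by
      have hcc : Continuous (fun τ => R τ (σ t) - R τ 0 - R τ (σ τ)) :=
        ((S.Rcx (σ t)).sub (S.Rcx 0)).sub S.Rcσ
      have := (hasDeriv_int hcc t t).hasDerivWithinAt (s := Ioi t)
      have := (this.add hψ).const_add ((∫ z in (0:ℝ)..x, U t z) + σ t)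
      have e : Gx σ R t x - R t 0 = R t (σ t) - R t 0 - R t (σ t) + 0 := by
        rw [Gx, if_neg (not_le.2 hxs)]; ring
      rw [e]
      exact this
    have heq : ∀ y ∈ Icc t b, σ y ≤ x → (∫ z in (0:ℝ)..x, U y z) + min x (σ y)
        = ((∫ z in (0:ℝ)..x, U t z) + σ t)
        + ((∫ τ in t..y, (R τ (σ t) - R τ 0 - R τ (σ τ))) + ∫ z in (σ t)..(σ y), U y z) := by
      intro y hy hyx
      have hyI : y ∈ Icc a b := ⟨ht.1.trans hy.1, hy.2⟩
      have ii : ∀ t c d, IntervalIntegrable (U t) volume c d :=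
        fun t c d => (S.Uct t).intervalIntegrable _ _
      have z0 : ∀ t, σ t ≤ x → ∫ z in (σ t)..x, U t z = 0 := by
        intro t h
        rw [intervalIntegral.integral_congr (g := fun _ => 0)]
        · simp
        · intro z hz
          rw [uIcc_of_le h] at hz
          exact S.Uz _ _ hz.1
      have e1 := intervalIntegral.integral_add_adjacent_intervals (ii y 0 (σ t)) (ii y (σ t) (σ y))
      have e2 := intervalIntegral.integral_add_adjacent_intervals (ii y 0 (σ y)) (ii y (σ y) x)
      have e3 := intervalIntegral.integral_add_adjacent_intervals (ii t 0 (σ t)) (ii t (σ t) x)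
      have e4 := S.rect t htI y hyI hy.1 (σ t) ⟨(S.σp t).le, le_rfl⟩
      rw [intervalIntegral.integral_sub (ii _ _ _) (ii _ _ _)] at e4
      have e5 := S.stefan t htI y hyI hy.1
      have hcc : Continuous (fun τ => R τ (σ t) - R τ 0) := (S.Rcx (σ t)).sub (S.Rcx 0)
      rw [intervalIntegral.integral_sub (hcc.intervalIntegrable _ _) (S.Rcσ.intervalIntegrable _ _),
        min_eq_right hyx]
      rw [z0 y hyx] at e2
      rw [z0 t hxs.le] at e3
      linarith
    refine hd.congr_of_eventuallyEq ?_ (heq t ⟨le_rfl, ht.2.le⟩ hxs.le)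
    have : ∀ᶠ y in 𝓝[>] t, σ y < x :=
      (S.σc.continuousAt.eventually_lt continuousAt_const hxs).filter_mono nhdsWithin_le_nhds
    filter_upwards [Ioc_mem_nhdsGT ht.2, this] with y hy h2
    exact heq y ⟨hy.1.le, hy.2⟩ h2.le

lemma int_Gx (S : Strip p a b σ U R) {t t' x : ℝ} (ht : t ∈ Icc a b) (ht' : t' ∈ Icc a b)
    (h : t ≤ t') (hx : 0 ≤ x) : ∫ τ in t..t', Gx σ R τ x = Pf σ U R t t' x := by
  have := intervalIntegral.integral_eq_sub_of_hasDeriv_right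
    (f := fun τ => (∫ z in (0:ℝ)..x, U τ z) + min x (σ τ)) (f' := fun t => Gx σ R t x - R t 0)
    (a := t) (b := t') (by
      refine Continuous.continuousOn (Continuous.add ?_ (continuous_const.min S.σc))
      exact intervalIntegral.continuous_parametric_intervalIntegral_of_continuous' S.Uc 0 x)
    (by
      intro y hy
      rw [min_eq_left h, max_eq_right h] at hy
      exact S.massDeriv ⟨ht.1.trans hy.1.le, hy.2.trans_le ht'.2⟩ hx)
    ((S.Gx_ii_t x _ _).sub ((S.Rcx 0).intervalIntegrable _ _))
  rw [intervalIntegral.integral_sub (S.Gx_ii_t x _ _) ((S.Rcx 0).intervalIntegrable _ _)] at this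
  rw [Pf, intervalIntegral.integral_sub ((S.Uct _).intervalIntegrable _ _)
    ((S.Uct _).intervalIntegrable _ _)]
  linarith

lemma Pf_cont (S : Strip p a b σ U R) (t t' : ℝ) : Continuous (Pf σ U R t t') := by
  unfold Pf
  refine Continuous.add (Continuous.add continuous_const ?_) (by fun_prop)
  refine continuous_iff_continuousAt.2 fun x => ?_
  exact (hasDeriv_int ((S.Uct t').sub (S.Uct t)) 0 x).continuousAt

end Strip

namespace Strip
variable {p a b : ℝ} {σ : ℝ → ℝ} {U R : ℝ → ℝ → ℝ}

lemma min_deriv {c x : ℝ} (h : x ≠ c) :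
    HasDerivAt (fun y => min y c) (if x < c then 1 else 0) x := by
  rcases lt_or_gt_of_ne h with h | h
  · rw [if_pos h]
    refine (hasDerivAt_id x).congr_of_eventuallyEq ?_
    filter_upwards [gt_mem_nhds h] with y hy
    simp [hy.le]
  · rw [if_neg (not_lt.2 h.le)]
    refine (hasDerivAt_const x c).congr_of_eventuallyEq ?_
    filter_upwards [lt_mem_nhds h] with y hy
    simp [hy.le]

lemma U_deriv (S : Strip p a b σ U R) {τ x : ℝ} (hτ : τ ∈ Icc a b) (hx : 0 < x) (h : x ≠ σ τ) :
    HasDerivAt (U τ) (Gx σ R τ x) x := by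
  rcases lt_or_gt_of_ne h with h | h
  · rw [Gx, if_pos h.le]; exact S.Ud τ hτ x ⟨hx, h⟩
  · rw [Gx, if_neg (not_le.2 h)]
    refine (hasDerivAt_const x 0).congr_of_eventuallyEq ?_
    filter_upwards [lt_mem_nhds h] with y hy
    exact S.Uz _ _ hy.le

lemma ibp (S : Strip p a b σ U R) {t t' τ L : ℝ} (h : t ≤ t')
    (hτ : τ ∈ Icc a b) (hL : σ t' ≤ L) (hL' : σ τ ≤ L) :
    ∫ x in (0:ℝ)..L, Pf σ U R t t' x * Gx σ R τ x =
      -(∫ y in t..t', R y 0) * U τ 0 - (∫ x in (0:ℝ)..L, (U t' x - U t x) * U τ x)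
        - ∫ x in (σ t)..(σ t'), U τ x := by
  have h0L : 0 ≤ L := (S.σp _).le.trans hL
  have hσ := S.σm h
  set χ : ℝ → ℝ := (Ioc (σ t) (σ t')).indicator (fun x => U τ x) with hχ
  have iχ : ∀ c d, IntervalIntegrable χ volume c d := fun c d =>
    indicator_ii (S.Uct τ) measurableSet_Ioc c d
  have cw : Continuous fun x => (U t' x - U t x) * U τ x :=
    ((S.Uct t').sub (S.Uct t)).mul (S.Uct τ)
  have iw : IntervalIntegrable (fun x => (U t' x - U t x) * U τ x) volume 0 L :=
    cw.intervalIntegrable _ _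
  have iPG : IntervalIntegrable (fun x => Pf σ U R t t' x * Gx σ R τ x) volume 0 L :=
    (S.Gx_ii_x τ 0 L).continuousOn_mul (S.Pf_cont t t').continuousOn
  have key := MeasureTheory.integral_eq_of_hasDerivAt_off_countable_of_le
    (fun x => Pf σ U R t t' x * U τ x)
    (fun x => ((U t' x - U t x) * U τ x + χ x) + Pf σ U R t t' x * Gx σ R τ x) h0L
    (s := {σ t, σ t', σ τ}) (Set.toFinite _).countable
    ((S.Pf_cont t t').mul (S.Uct τ)).continuousOn (by
      rintro x ⟨hx, hxn⟩
      simp only [mem_insert_iff, mem_singleton_iff, not_or] at hxn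
      have hc : Continuous fun x => U t' x - U t x := (S.Uct t').sub (S.Uct t)
      have d1 : HasDerivAt (Pf σ U R t t') ((U t' x - U t x) +
          ((if x < σ t' then 1 else 0) - (if x < σ t then 1 else 0))) x := by
        unfold Pf
        exact ((hasDeriv_int hc 0 x).const_add _).add ((min_deriv hxn.2.1).sub (min_deriv hxn.1))
      have := d1.mul (S.U_deriv hτ hx.1 hxn.2.2)
      refine this.congr_deriv ?_
      have : χ x = ((if x < σ t' then 1 else 0) - (if x < σ t then 1 else 0)) * U τ x := by
        rw [hχ, indicator]
        rcases lt_or_gt_of_ne hxn.1 with h1 | h1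
        · rw [if_neg (fun h => absurd h.1 (not_lt.2 h1.le)), if_pos h1, if_pos (h1.trans_le hσ)]
          simp
        · rcases lt_or_gt_of_ne hxn.2.1 with h2 | h2
          · rw [if_pos ⟨h1, h2.le⟩, if_pos h2, if_neg (not_lt.2 h1.le)]; simp
          · rw [if_neg (fun h => absurd h.2 (not_le.2 h2)), if_neg (not_lt.2 h1.le),
              if_neg (not_lt.2 h2.le)]; simp
      rw [this]; ring)
    ((iw.add (iχ _ _)).add iPG)
  rw [intervalIntegral.integral_add (iw.add (iχ _ _)) iPG,
    intervalIntegral.integral_add iw (iχ _ _), S.Uz τ L hL'] at key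
  have hχi : ∫ x in (0:ℝ)..L, χ x = ∫ x in (σ t)..(σ t'), U τ x := by
    rw [intervalIntegral.integral_of_le h0L, intervalIntegral.integral_of_le hσ, hχ,
      setIntegral_indicator measurableSet_Ioc]
    congr 2
    ext x
    simp only [mem_inter_iff, mem_Ioc]
    exact ⟨fun h => h.2, fun h => ⟨⟨(S.σp t).trans h.1, h.2.trans hL⟩, h⟩⟩
  have hP0 : Pf σ U R t t' 0 = ∫ y in t..t', R y 0 := by
    simp [Pf, (S.σp t).le, (S.σp t').le]
  rw [hχi, hP0] at key
  linarith

lemma Pf_add (S : Strip p a b σ U R) (c t t' x : ℝ) :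
    Pf σ U R t t' x = Pf σ U R c t' x - Pf σ U R c t x := by
  have e := intervalIntegral.integral_add_adjacent_intervals
    ((S.Rcx 0).intervalIntegrable (μ := volume) c t) ((S.Rcx 0).intervalIntegrable t t')
  simp only [Pf]
  have ii : ∀ t, IntervalIntegrable (U t) volume 0 x := fun t => (S.Uct t).intervalIntegrable _ _
  rw [intervalIntegral.integral_sub (ii _) (ii _), intervalIntegral.integral_sub (ii _) (ii _),
    intervalIntegral.integral_sub (ii _) (ii _)]
  linarith

lemma Pf_deriv (S : Strip p a b σ U R) (c : ℝ) {t x : ℝ} (ht : t ∈ Ico a b) (hx : 0 ≤ x) :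
    HasDerivWithinAt (fun y => Pf σ U R c y x) (Gx σ R t x) (Ioi t) t := by
  have h1 := S.massDeriv ht hx
  have h2 := (hasDeriv_int (S.Rcx 0) c t).hasDerivWithinAt (s := Ioi t)
  have h3 := (h2.add h1).sub_const ((∫ z in (0:ℝ)..x, U c z) + min x (σ c))
  have e : (fun y => Pf σ U R c y x) = fun y => ((∫ τ in c..y, R τ 0) +
    ((∫ z in (0:ℝ)..x, U y z) + min x (σ y))) - ((∫ z in (0:ℝ)..x, U c z) + min x (σ c)) := by
    funext y
    rw [Pf, intervalIntegral.integral_sub ((S.Uct _).intervalIntegrable _ _)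
      ((S.Uct _).intervalIntegrable _ _)]
    ring
  rw [e]
  have e' : Gx σ R t x = R t 0 + (Gx σ R t x - R t 0) := by ring
  rw [e']
  exact h3

lemma Gx_abs {C : ℝ} (hC : ∀ t x, |R t x| ≤ C) (t x : ℝ) : |Gx σ R t x| ≤ C := by
  unfold Gx; split_ifs
  · exact hC _ _
  · simpa using (abs_nonneg _).trans (hC 0 0)

lemma Pf_abs (S : Strip p a b σ U R) {C : ℝ} (hC : ∀ t x, |R t x| ≤ C) {t t' x : ℝ}
    (ht : t ∈ Icc a b) (ht' : t' ∈ Icc a b)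
    (h : t ≤ t') (hx : 0 ≤ x) : |Pf σ U R t t' x| ≤ C * (t' - t) := by
  rw [← S.int_Gx ht ht' h hx, ← abs_of_nonneg (sub_nonneg.2 h), ← Real.norm_eq_abs]
  refine intervalIntegral.norm_integral_le_of_norm_le_const (fun z _ => ?_)
  exact Gx_abs hC _ _

lemma J_deriv (S : Strip p a b σ U R) {h t L : ℝ} (hh : 0 < h) (hat : a ≤ t) (hb : t + h < b)
    (hL0 : 0 ≤ L) :
    HasDerivWithinAt (fun y => ∫ x in (0:ℝ)..L, (Pf σ U R y (y + h) x) ^ 2)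
      (∫ x in (0:ℝ)..L, 2 * Pf σ U R t (t + h) x * (Gx σ R (t + h) x - Gx σ R t x)) (Ioi t) t := by
  obtain ⟨C, hC⟩ := S.Rb
  have hC0 : 0 ≤ C := (abs_nonneg _).trans (hC 0 0)
  have htI : t ∈ Icc a b := ⟨hat, by linarith⟩
  rw [hasDerivWithinAt_iff_tendsto_slope' (by simp)]
  have hslope : ∀ y, slope (fun y => ∫ x in (0:ℝ)..L, (Pf σ U R y (y + h) x) ^ 2) t y =
      ∫ x in (0:ℝ)..L, slope (fun y => (Pf σ U R y (y + h) x) ^ 2) t y := by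
    intro y
    simp only [slope_def_field]
    rw [intervalIntegral.integral_div, intervalIntegral.integral_sub]
    · exact ((S.Pf_cont _ _).pow 2).intervalIntegrable _ _
    · exact ((S.Pf_cont _ _).pow 2).intervalIntegrable _ _
  simp only [funext hslope]
  refine intervalIntegral.tendsto_integral_filter_of_dominated_convergence
    (fun _ => 4 * C ^ 2 * h) ?_ ?_ (by simp) ?_
  · refine Eventually.of_forall fun y => Continuous.aestronglyMeasurable ?_
    simp only [slope_def_field]
    exact (((S.Pf_cont _ _).pow 2).sub ((S.Pf_cont _ _).pow 2)).div_const _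
  · filter_upwards [Ioo_mem_nhdsGT (show t < b - h by linarith)] with y hy
    refine Eventually.of_forall fun x hx => ?_
    rw [uIoc_of_le hL0] at hx
    have hyt : 0 < y - t := by linarith [hy.1]
    simp only [slope_def_field, Real.norm_eq_abs]
    have m1 : y + h ∈ Icc a b := ⟨by linarith [hy.1], by linarith [hy.2]⟩
    have m2 : y ∈ Icc a b := ⟨by linarith [hy.1], by linarith [hy.2]⟩
    have m3 : t + h ∈ Icc a b := ⟨by linarith, by linarith⟩
    have b1 := S.Pf_abs hC m2 m1 (by linarith) hx.1.le
    have b2 := S.Pf_abs hC htI m3 (by linarith) hx.1.le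
    have b3 := S.Pf_abs hC m3 m1 (by linarith) hx.1.le
    have b4 := S.Pf_abs hC htI m2 hy.1.le hx.1.le
    have e : Pf σ U R y (y + h) x - Pf σ U R t (t + h) x
        = Pf σ U R (t + h) (y + h) x - Pf σ U R t y x := by
      rw [S.Pf_add t y, S.Pf_add t (t + h) (y + h)]; ring
    rw [abs_div, abs_of_pos hyt, div_le_iff₀ hyt, sq_sub_sq, abs_mul, e]
    have a1 : |Pf σ U R y (y + h) x + Pf σ U R t (t + h) x| ≤ 2 * C * h := by
      refine (abs_add_le _ _).trans ?_
      have : y + h - y = h := by ring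
      rw [this] at b1
      have : t + h - t = h := by ring
      rw [this] at b2
      linarith
    have a2 : |Pf σ U R (t + h) (y + h) x - Pf σ U R t y x| ≤ 2 * C * (y - t) := by
      refine (abs_sub _ _).trans ?_
      have : y + h - (t + h) = y - t := by ring
      rw [this] at b3
      linarith
    calc _ ≤ (2 * C * h) * (2 * C * (y - t)) := by gcongr
      _ = _ := by ring
  · refine Eventually.of_forall fun x hx => ?_
    rw [uIoc_of_le hL0] at hx
    have d1 : HasDerivWithinAt (fun y => Pf σ U R a y x) (Gx σ R t x) (Ioi t) t :=
      S.Pf_deriv a ⟨hat, by linarith⟩ hx.1.le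
    have d2 : HasDerivWithinAt (fun y => Pf σ U R a (y + h) x) (Gx σ R (t + h) x) (Ioi t) t := by
      have := S.Pf_deriv a (t := t + h) ⟨by linarith, hb⟩ hx.1.le
      have := HasDerivWithinAt.comp t (h := fun y => y + h) (h' := 1) (s := Ioi t) this
        ((hasDerivWithinAt_id t _).add_const h) (fun y hy => by simpa using hy)
      rw [mul_one] at this
      exact this
    have d3 := (d2.sub d1).pow 2
    have := (hasDerivWithinAt_iff_tendsto_slope' (by simp)).1 d3
    have e : (fun y => Pf σ U R y (y + h) x ^ 2) =
        (((fun y => Pf σ U R a (y + h) x) - fun y => Pf σ U R a y x) ^ 2) := by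
      funext y; simp [S.Pf_add a y]
    rw [e]
    convert this using 2
    simp [S.Pf_add a t]

lemma J_cont (S : Strip p a b σ U R) (h L : ℝ) :
    Continuous (fun y => ∫ x in (0:ℝ)..L, (Pf σ U R y (y + h) x) ^ 2) := by
  refine intervalIntegral.continuous_parametric_intervalIntegral_of_continuous'
    (f := fun y x => (Pf σ U R y (y + h) x) ^ 2) ?_ 0 L
  have hσ := S.σc
  have c1 : Continuous (fun q : ℝ × ℝ => ∫ τ in q.1..(q.1 + h), R τ 0) := by
    have : ∀ q : ℝ × ℝ, ∫ τ in q.1..(q.1 + h), R τ 0 =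
        (∫ τ in (0:ℝ)..(q.1 + h), R τ 0) - ∫ τ in (0:ℝ)..q.1, R τ 0 := fun q =>
      (intervalIntegral.integral_interval_sub_left ((S.Rcx 0).intervalIntegrable _ _)
        ((S.Rcx 0).intervalIntegrable _ _)).symm
    simp only [this]
    have hI : Continuous fun y => ∫ τ in (0:ℝ)..y, R τ 0 :=
      continuous_iff_continuousAt.2 fun x => (hasDeriv_int (S.Rcx 0) 0 x).continuousAt
    exact (hI.comp (by fun_prop)).sub (hI.comp continuous_fst)
  have c2 : Continuous (fun q : ℝ × ℝ => ∫ z in (0:ℝ)..q.2, (U (q.1 + h) z - U q.1 z)) := by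
    refine intervalIntegral.continuous_parametric_intervalIntegral_of_continuous
      (f := fun (q : ℝ × ℝ) z => U (q.1 + h) z - U q.1 z) ?_ continuous_snd
    refine Continuous.sub ?_ ?_
    · exact S.Uc.comp (by fun_prop : Continuous fun q : (ℝ × ℝ) × ℝ => (q.1.1 + h, q.2))
    · exact S.Uc.comp (by fun_prop : Continuous fun q : (ℝ × ℝ) × ℝ => (q.1.1, q.2))
  have c3 : Continuous (fun q : ℝ × ℝ => min q.2 (σ (q.1 + h)) - min q.2 (σ q.1)) := by fun_prop
  exact ((c1.add c2).add c3).pow 2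

lemma J_deriv_le (S : Strip p a b σ U R) {h t L r : ℝ} (hh : 0 < h) (hat : a ≤ t) (hb : t + h < b)
    (hL : σ b ≤ L) (hr0 : 0 ≤ r) (hrL : r ≤ L) {θ : ℝ → ℝ} (hθ : Continuous θ) :
    (∫ x in (0:ℝ)..L, 2 * Pf σ U R t (t + h) x * (Gx σ R (t + h) x - Gx σ R t x)) ≤
      -2 * (∫ y in t..(t + h), R y 0) * (U (t + h) 0 - U t 0)
      - 4 * h * (∫ x in (0:ℝ)..r, θ x * (U (t + h) x - U t x)) + 2 * h ^ 2 * ∫ x in (0:ℝ)..r, θ x ^ 2 := by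
  have hL0 : 0 ≤ L := hr0.trans hrL
  have m1 : t ∈ Icc a b := ⟨hat, by linarith⟩
  have m2 : t + h ∈ Icc a b := ⟨by linarith, by linarith⟩
  have hth : t ≤ t + h := by linarith
  have l1 := (S.σm m1.2).trans hL
  have l2 := (S.σm m2.2).trans hL
  have i1 := S.ibp hth m2 l2 l2
  have i2 := S.ibp hth m1 l2 l1
  have iPG : ∀ τ, IntervalIntegrable (fun x => Pf σ U R t (t + h) x * Gx σ R τ x) volume 0 L :=
    fun τ => (S.Gx_ii_x τ 0 L).continuousOn_mul (S.Pf_cont t (t + h)).continuousOn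
  have cw : Continuous fun x => U (t + h) x - U t x := (S.Uct _).sub (S.Uct t)
  have e1 : (∫ x in (0:ℝ)..L, 2 * Pf σ U R t (t + h) x * (Gx σ R (t + h) x - Gx σ R t x)) =
      2 * ((∫ x in (0:ℝ)..L, Pf σ U R t (t + h) x * Gx σ R (t + h) x) -
        ∫ x in (0:ℝ)..L, Pf σ U R t (t + h) x * Gx σ R t x) := by
    rw [← intervalIntegral.integral_sub (iPG _) (iPG _), ← intervalIntegral.integral_const_mul]
    congr 1; funext x; ring
  have z1 : ∫ x in (σ t)..(σ (t + h)), U t x = 0 := by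
    rw [intervalIntegral.integral_congr (g := fun _ => 0)]
    · simp
    · intro z hz
      rw [uIcc_of_le (S.σm hth)] at hz
      exact S.Uz _ _ hz.1
  have z2 : 0 ≤ ∫ x in (σ t)..(σ (t + h)), U (t + h) x :=
    intervalIntegral.integral_nonneg (S.σm hth) (fun x _ => S.Un _ _)
  have e2 : (∫ x in (0:ℝ)..L, (U (t + h) x - U t x) * U (t + h) x) -
      (∫ x in (0:ℝ)..L, (U (t + h) x - U t x) * U t x) =
      ∫ x in (0:ℝ)..L, (U (t + h) x - U t x) ^ 2 := by
    have cc : ∀ τ, Continuous fun x => (U (t + h) x - U t x) * U τ x := fun τ => cw.mul (S.Uct τ)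
    rw [← intervalIntegral.integral_sub ((cc _).intervalIntegrable _ _)
      ((cc _).intervalIntegrable _ _)]
    congr 1; funext x; ring
  have e3 : (∫ x in (0:ℝ)..r, (U (t + h) x - U t x) ^ 2) ≤
      ∫ x in (0:ℝ)..L, (U (t + h) x - U t x) ^ 2 := by
    have cc : Continuous fun x => (U (t + h) x - U t x) ^ 2 := cw.pow 2
    have := intervalIntegral.integral_add_adjacent_intervals
      (cc.intervalIntegrable (μ := volume) 0 r) (cc.intervalIntegrable r L)
    have h0 : 0 ≤ ∫ x in r..L, (U (t + h) x - U t x) ^ 2 :=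
      intervalIntegral.integral_nonneg hrL (fun x _ => sq_nonneg _)
    linarith
  have e4 : 2 * h * (∫ x in (0:ℝ)..r, θ x * (U (t + h) x - U t x))
      - h ^ 2 * (∫ x in (0:ℝ)..r, θ x ^ 2) ≤ ∫ x in (0:ℝ)..r, (U (t + h) x - U t x) ^ 2 := by
    have c1 : Continuous fun x => 2 * h * (θ x * (U (t + h) x - U t x)) :=
      continuous_const.mul (hθ.mul cw)
    have c2 : Continuous fun x => h ^ 2 * θ x ^ 2 := continuous_const.mul (hθ.pow 2)
    rw [← intervalIntegral.integral_const_mul, ← intervalIntegral.integral_const_mul,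
      ← intervalIntegral.integral_sub (c1.intervalIntegrable _ _) (c2.intervalIntegrable _ _)]
    refine intervalIntegral.integral_mono_on hr0 ?_ ((cw.pow 2).intervalIntegrable _ _) ?_
    · exact (c1.sub c2).intervalIntegrable _ _
    · intro x _
      nlinarith [sq_nonneg (U (t + h) x - U t x - h * θ x)]
  rw [e1, i1, i2, z1]
  linarith

lemma Gx_rc (S : Strip p a b σ U R) (t x : ℝ) :
    Tendsto (fun y => Gx σ R y x) (𝓝[>] t) (𝓝 (Gx σ R t x)) := by
  by_cases h : x ≤ σ t
  · have : Tendsto (fun y => R y x) (𝓝[>] t) (𝓝 (R t x)) :=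
      ((S.Rcx x).tendsto t).mono_left nhdsWithin_le_nhds
    rw [show Gx σ R t x = R t x from if_pos h]
    refine this.congr' ?_
    filter_upwards [self_mem_nhdsWithin] with y hy
    exact (if_pos (h.trans (S.σm (le_of_lt hy)))).symm
  · rw [show Gx σ R t x = 0 from if_neg h]
    refine tendsto_const_nhds.congr' ?_
    push Not at h
    have : ∀ᶠ y in 𝓝[>] t, σ y < x :=
      (S.σc.continuousAt.eventually_lt continuousAt_const h).filter_mono nhdsWithin_le_nhds
    filter_upwards [this] with y hy
    exact (if_neg (not_le.2 hy)).symm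

/-- L² differential inequality -/
lemma L2_dini (S : Strip p a b σ U R) {t L κ : ℝ} (ht : t ∈ Ico a b) (hL : σ b ≤ L)
    (hκ : -2 * R t 0 * U t 0 - 2 * (∫ x in (0:ℝ)..L, Gx σ R t x ^ 2) < κ) :
    ∀ᶠ z in 𝓝[>] t, slope (fun y => ∫ x in (0:ℝ)..L, U y x ^ 2) t z < κ := by
  obtain ⟨C, hC⟩ := S.Rb
  have hC0 : 0 ≤ C := (abs_nonneg _).trans (hC 0 0)
  have hL0 : 0 ≤ L := (S.σp b).le.trans hL
  have m1 : t ∈ Icc a b := ⟨ht.1, ht.2.le⟩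
  have iPG : ∀ t t' τ, IntervalIntegrable (fun x => Pf σ U R t t' x * Gx σ R τ x) volume 0 L :=
    fun t t' τ => (S.Gx_ii_x τ 0 L).continuousOn_mul (S.Pf_cont t t').continuousOn
  have T1 : Tendsto (fun z => -((∫ y in t..z, R y 0) / (z - t)) * (U z 0 + U t 0)
      - ∫ x in (0:ℝ)..L, Pf σ U R t z x / (z - t) * (Gx σ R z x + Gx σ R t x)) (𝓝[>] t)
      (𝓝 (-2 * R t 0 * U t 0 - 2 * (∫ x in (0:ℝ)..L, Gx σ R t x ^ 2))) := by
    have d0 := (hasDerivWithinAt_iff_tendsto_slope' (by simp)).1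
      ((hasDeriv_int (S.Rcx 0) t t).hasDerivWithinAt (s := Ioi t))
    have u0 : Tendsto (fun z => U z 0) (𝓝[>] t) (𝓝 (U t 0)) :=
      ((S.Ucx 0).tendsto t).mono_left nhdsWithin_le_nhds
    have A := (d0.neg).mul (u0.add_const (U t 0))
    have B : Tendsto (fun z => ∫ x in (0:ℝ)..L, Pf σ U R t z x / (z - t) * (Gx σ R z x + Gx σ R t x))
        (𝓝[>] t) (𝓝 (∫ x in (0:ℝ)..L, Gx σ R t x * (Gx σ R t x + Gx σ R t x))) := by
      refine intervalIntegral.tendsto_integral_filter_of_dominated_convergence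
        (fun _ => C * (2 * C)) ?_ ?_ (by simp) ?_
      · refine Eventually.of_forall fun y => Measurable.aestronglyMeasurable ?_
        exact ((S.Pf_cont t y).measurable.div_const _).mul ((S.Gx_meas_x y).add (S.Gx_meas_x t))
      · filter_upwards [Ioo_mem_nhdsGT ht.2] with y hy
        refine Eventually.of_forall fun x hx => ?_
        rw [uIoc_of_le hL0] at hx
        have hyt : 0 < y - t := by linarith [hy.1]
        rw [Real.norm_eq_abs, abs_mul, abs_div, abs_of_pos hyt]
        have b1 := S.Pf_abs hC m1 ⟨by linarith [ht.1], hy.2.le⟩ hy.1.le hx.1.le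
        have b2 : |Gx σ R y x + Gx σ R t x| ≤ 2 * C := by
          have := Gx_abs (σ := σ) hC y x
          have := Gx_abs (σ := σ) hC t x
          refine (abs_add_le _ _).trans (by linarith)
        have b3 : |Pf σ U R t y x| / (y - t) ≤ C := by rwa [div_le_iff₀ hyt]
        gcongr
      · refine Eventually.of_forall fun x hx => ?_
        rw [uIoc_of_le hL0] at hx
        have d := (hasDerivWithinAt_iff_tendsto_slope' (by simp)).1 (S.Pf_deriv t ht hx.1.le)
        have e : slope (fun y => Pf σ U R t y x) t = fun z => Pf σ U R t z x / (z - t) := by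
          funext z
          simp only [slope_def_field]
          simp [Pf]
        rw [e] at d
        exact d.mul ((S.Gx_rc t x).add_const _)
    refine (A.sub B).congr' ?_ |>.trans (le_of_eq ?_)
    · filter_upwards with z
      simp only [slope_def_field, intervalIntegral.integral_same, sub_zero]
    · congr 1
      have : ∫ x in (0:ℝ)..L, Gx σ R t x * (Gx σ R t x + Gx σ R t x) =
          2 * ∫ x in (0:ℝ)..L, Gx σ R t x ^ 2 := by
        rw [← intervalIntegral.integral_const_mul]
        congr 1; funext x; ring
      rw [this]; ring
  filter_upwards [T1.eventually_lt_const hκ, Ioo_mem_nhdsGT ht.2] with z hz hz'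
  refine lt_of_le_of_lt ?_ hz
  have m2 : z ∈ Icc a b := ⟨by linarith [ht.1, hz'.1], hz'.2.le⟩
  have hzt : 0 < z - t := by linarith [hz'.1]
  have l1 := (S.σm m1.2).trans hL
  have l2 := (S.σm m2.2).trans hL
  have i1 := S.ibp hz'.1.le m2 l2 l2
  have i2 := S.ibp hz'.1.le m1 l2 l1
  have z1 : 0 ≤ ∫ x in (σ t)..(σ z), U t x :=
    intervalIntegral.integral_nonneg (S.σm hz'.1.le) (fun x _ => S.Un _ _)
  have z2 : 0 ≤ ∫ x in (σ t)..(σ z), U z x :=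
    intervalIntegral.integral_nonneg (S.σm hz'.1.le) (fun x _ => S.Un _ _)
  have cw : Continuous fun x => U z x - U t x := (S.Uct _).sub (S.Uct t)
  have e2 : (∫ x in (0:ℝ)..L, (U z x - U t x) * U z x) +
      (∫ x in (0:ℝ)..L, (U z x - U t x) * U t x) =
      (∫ x in (0:ℝ)..L, U z x ^ 2) - ∫ x in (0:ℝ)..L, U t x ^ 2 := by
    have cc : ∀ τ, Continuous fun x => (U z x - U t x) * U τ x := fun τ => cw.mul (S.Uct τ)
    have c2 : ∀ τ, Continuous fun x => U τ x ^ 2 := fun τ => (S.Uct τ).pow 2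
    rw [← intervalIntegral.integral_add ((cc _).intervalIntegrable _ _)
      ((cc _).intervalIntegrable _ _), ← intervalIntegral.integral_sub
      ((c2 _).intervalIntegrable _ _) ((c2 _).intervalIntegrable _ _)]
    congr 1; funext x; ring
  have e3 : (∫ x in (0:ℝ)..L, Pf σ U R t z x / (z - t) * (Gx σ R z x + Gx σ R t x)) =
      ((∫ x in (0:ℝ)..L, Pf σ U R t z x * Gx σ R z x) +
        (∫ x in (0:ℝ)..L, Pf σ U R t z x * Gx σ R t x)) / (z - t) := by
    rw [← intervalIntegral.integral_add (iPG _ _ _) (iPG _ _ _), ← intervalIntegral.integral_div]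
    congr 1; funext x; ring
  rw [slope_def_field, e3, i1, i2, div_le_iff₀ hzt, ← e2]
  have : (-((∫ y in t..z, R y 0) / (z - t)) * (U z 0 + U t 0) -
      (-(∫ y in t..z, R y 0) * U z 0 - (∫ x in (0:ℝ)..L, (U z x - U t x) * U z x)
          - (∫ x in (σ t)..(σ z), U z x) +
        (-(∫ y in t..z, R y 0) * U t 0 - (∫ x in (0:ℝ)..L, (U z x - U t x) * U t x)
          - ∫ x in (σ t)..(σ z), U t x)) / (z - t)) * (z - t)
      = (∫ x in (0:ℝ)..L, (U z x - U t x) * U z x) + (∫ x in (0:ℝ)..L, (U z x - U t x) * U t x)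
        + ((∫ x in (σ t)..(σ z), U z x) + ∫ x in (σ t)..(σ z), U t x) := by
    field_simp; ring
  rw [this]
  linarith

end Strip

lemma rpow_tangent {p x y : ℝ} (hp : 1 < p) (hx : 0 ≤ x) (hy : 0 ≤ y) :
    x ^ p * (y - x) ≤ y ^ (p + 1) / (p + 1) - x ^ (p + 1) / (p + 1) := by
  have hp0 : 0 < p := by linarith
  have hq : ((p + 1) / p).HolderConjugate (p + 1) := by
    rw [Real.holderConjugate_iff]
    constructor
    · rw [lt_div_iff₀ hp0]; linarith
    · field_simp
  have := Real.young_inequality_of_nonneg (Real.rpow_nonneg hx p) hy hq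
  rw [← Real.rpow_mul hx] at this
  have e1 : p * ((p + 1) / p) = p + 1 := by field_simp
  rw [e1] at this
  have e2 : x ^ p * x = x ^ (p + 1) := by
    rw [Real.rpow_add_one' hx (by linarith)]
  have e3 : x ^ (p + 1) / ((p + 1) / p) = x ^ (p + 1) - x ^ (p + 1) / (p + 1) := by
    field_simp; ring
  rw [e3] at this
  rw [mul_sub, e2]
  linarith

lemma rpow_lip {p C : ℝ} (hp : 1 < p) {x y : ℝ} (hx : x ∈ Icc 0 C) (hy : y ∈ Icc 0 C) :
    |y ^ p - x ^ p| ≤ p * C ^ (p - 1) * |y - x| := by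
  have := Convex.norm_image_sub_le_of_norm_hasDerivWithin_le (f := fun x : ℝ => x ^ p)
    (f' := fun x => p * x ^ (p - 1)) (s := Icc 0 C) (C := p * C ^ (p - 1)) (x := x) (y := y)
    (fun z _ => (Real.hasDerivAt_rpow_const (Or.inr hp.le)).hasDerivWithinAt)
    (fun z hz => by
      rw [Real.norm_eq_abs, abs_of_nonneg (mul_nonneg (by linarith) (Real.rpow_nonneg hz.1 _))]
      have := Real.rpow_le_rpow hz.1 hz.2 (show 0 ≤ p - 1 by linarith)
      gcongr
      ) (convex_Icc _ _) hx hy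
  simpa using this

lemma avg_shift {k : ℝ → ℝ} (hk : Continuous k) (t1 t2 : ℝ) :
    Tendsto (fun h => (∫ t in t1..t2, (k (t + h) - k t)) / h) (𝓝[>] 0) (𝓝 (k t2 - k t1)) := by
  have h1 : ∀ t, Tendsto (fun h => (∫ y in t..(t + h), k y) / h) (𝓝[>] 0) (𝓝 (k t)) := by
    intro t
    have d := Strip.hasDeriv_int hk t t
    have d2 : HasDerivAt (fun h => ∫ y in t..(t + h), k y) (k t) 0 := by
      have := HasDerivAt.comp (𝕜 := ℝ) 0 (h := fun y => t + y) (h' := 1)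
        (h₂ := fun y => ∫ τ in t..y, k τ) (by simpa using d)
        ((hasDerivAt_id (0:ℝ)).const_add t)
      simpa [Function.comp_def] using this
    have := (hasDerivWithinAt_iff_tendsto_slope' (by simp)).1 (d2.hasDerivWithinAt (s := Ioi 0))
    refine this.congr fun h => ?_
    simp [slope_def_field]
  refine ((h1 t2).sub (h1 t1)).congr fun h => ?_
  rw [← sub_div]
  congr 1
  have ii : ∀ c d, IntervalIntegrable k volume c d := fun c d => hk.intervalIntegrable _ _
  have hs : Continuous fun t => k (t + h) := hk.comp (by fun_prop)
  rw [intervalIntegral.integral_sub (hs.intervalIntegrable _ _) (ii _ _),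
    intervalIntegral.integral_comp_add_right]
  have e1 := intervalIntegral.integral_add_adjacent_intervals (ii t1 t2) (ii t2 (t2 + h))
  have e2 := intervalIntegral.integral_add_adjacent_intervals (ii t1 (t1 + h)) (ii (t1 + h) (t2 + h))
  linarith

namespace Strip
variable {p a b : ℝ} {σ : ℝ → ℝ} {U R : ℝ → ℝ → ℝ}

lemma U_int (S : Strip p a b σ U R) {τ x : ℝ} (hτ : τ ∈ Icc a b) (hx : x ∈ Icc 0 (σ τ)) :
    ∫ z in (0:ℝ)..x, R τ z = U τ x - U τ 0 := by
  refine intervalIntegral.integral_eq_sub_of_hasDerivAt_of_le hx.1 (S.Uct τ).continuousOn ?_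
    ((S.Rct τ).intervalIntegrable _ _)
  intro z hz
  exact S.Ud τ hτ z ⟨hz.1, hz.2.trans_le hx.2⟩

lemma osc (S : Strip p a b σ U R) {ε : ℝ} (hε : 0 < ε) : ∃ δ > 0, ∀ t ∈ Icc a b, ∀ t' ∈ Icc a b,
    t ≤ t' → t' - t ≤ δ → |U t' 0 - U t 0| ≤ ε * √(t' - t) := by
  have hK : IsCompact (Icc a b ×ˢ Icc 0 (σ a)) := isCompact_Icc.prod isCompact_Icc
  have huc := hK.uniformContinuousOn_of_continuous S.Rc.continuousOn
  obtain ⟨η, hη, hu⟩ := Metric.uniformContinuousOn_iff.1 huc (ε / 2) (by positivity)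
  have hσ := S.σp a
  set m := min (η / 2) (σ a) with hm
  have hm0 : 0 < m := lt_min (by positivity) hσ
  refine ⟨min (η / 2) (m ^ 2), lt_min (by positivity) (by positivity), ?_⟩
  intro t ht t' ht' htt hd
  set ρ := √(t' - t) with hρ
  have hρ0 : 0 ≤ ρ := Real.sqrt_nonneg _
  have hρ2 : ρ ^ 2 = t' - t := Real.sq_sqrt (by linarith)
  have hρm : ρ ≤ m := by
    rw [hρ]; exact Real.sqrt_le_iff.2 ⟨hm0.le, hd.trans (min_le_right _ _)⟩
  rcases hρ0.eq_or_lt with h0 | hρp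
  · have : t' = t := by rw [← h0] at hρ2; nlinarith
    rw [this]; simp; positivity
  have hρη : ρ < η := by have := hρm.trans (min_le_left _ _); linarith
  have hρσ : ρ ≤ σ a := hρm.trans (min_le_right _ _)
  have hdη : t' - t < η := by have := hd.trans (min_le_left _ _); linarith
  have hσt : σ a ≤ σ t := S.σm ht.1
  have hσt' : σ a ≤ σ t' := S.σm ht'.1
  have r1 := S.rect t ht t' ht' htt ρ ⟨hρ0, hρσ.trans hσt⟩
  have r2 : |∫ τ in t..t', (R τ ρ - R τ 0)| ≤ ε / 2 * (t' - t) := by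
    rw [← abs_of_nonneg (sub_nonneg.2 htt), ← Real.norm_eq_abs]
    refine intervalIntegral.norm_integral_le_of_norm_le_const fun z hz => ?_
    rw [uIoc_of_le htt] at hz
    have hzI : z ∈ Icc a b := ⟨by linarith [ht.1, hz.1], by linarith [ht'.2, hz.2]⟩
    have := hu (z, ρ) ⟨hzI, hρ0, hρσ⟩ (z, 0) ⟨hzI, le_rfl, hσ.le⟩ (by
      rw [Prod.dist_eq]; simp [hη, Real.dist_eq, abs_of_pos hρp, hρη])
    rw [Real.dist_eq] at this
    exact this.le
  have r3 : ∀ x ∈ Icc 0 ρ, |U t' x - U t x - (U t' 0 - U t 0)| ≤ ε / 2 * ρ := by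
    intro x hx
    have e1 := S.U_int ht ⟨hx.1, (hx.2.trans hρσ).trans hσt⟩
    have e2 := S.U_int ht' ⟨hx.1, (hx.2.trans hρσ).trans hσt'⟩
    have e3 : U t' x - U t x - (U t' 0 - U t 0) = ∫ z in (0:ℝ)..x, (R t' z - R t z) := by
      rw [intervalIntegral.integral_sub ((S.Rct _).intervalIntegrable _ _)
        ((S.Rct _).intervalIntegrable _ _), e1, e2]; ring
    rw [e3]
    have : |∫ z in (0:ℝ)..x, (R t' z - R t z)| ≤ ε / 2 * |x - 0| := by
      rw [← Real.norm_eq_abs]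
      refine intervalIntegral.norm_integral_le_of_norm_le_const fun z hz => ?_
      rw [uIoc_of_le hx.1] at hz
      have hz' : z ∈ Icc 0 (σ a) := ⟨hz.1.le, hz.2.trans (hx.2.trans hρσ)⟩
      have := hu (t', z) ⟨ht', hz'⟩ (t, z) ⟨ht, hz'⟩ (by
        rw [Prod.dist_eq]; simp [hη, Real.dist_eq, abs_of_nonneg (sub_nonneg.2 htt), hdη])
      rw [Real.dist_eq] at this
      exact this.le
    rw [sub_zero, abs_of_nonneg hx.1] at this
    exact this.trans (by gcongr; exact hx.2)
  have r4 : |∫ x in (0:ℝ)..ρ, (U t' x - U t x - (U t' 0 - U t 0))| ≤ ε / 2 * ρ * |ρ - 0| := by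
    rw [← Real.norm_eq_abs]
    refine intervalIntegral.norm_integral_le_of_norm_le_const fun z hz => ?_
    rw [uIoc_of_le hρ0] at hz
    exact r3 z ⟨hz.1.le, hz.2⟩
  have cc : Continuous fun x => U t' x - U t x := (S.Uct _).sub (S.Uct _)
  rw [intervalIntegral.integral_sub (cc.intervalIntegrable _ _) (by simp), r1,
    intervalIntegral.integral_const, sub_zero, abs_of_nonneg hρ0, smul_eq_mul] at r4
  have r5 : |ρ * (U t' 0 - U t 0)| ≤ ε * ρ ^ 2 := by
    rw [← hρ2] at r2
    rw [abs_le] at *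
    constructor <;> nlinarith
  rw [abs_mul, abs_of_pos hρp] at r5
  have : ρ * |U t' 0 - U t 0| ≤ ρ * (ε * ρ) := by nlinarith
  exact le_of_mul_le_mul_left this hρp

lemma bdry (S : Strip p a b σ U R) {ε : ℝ} (hε : 0 < ε) : ∃ δ > 0, ∀ h, 0 < h → h ≤ δ →
    ∀ t ∈ Icc a b, t + h ∈ Icc a b →
    -(∫ y in t..(t + h), R y 0) * (U (t + h) 0 - U t 0) ≤
      h * (U (t + h) 0 ^ (p + 1) / (p + 1) - U t 0 ^ (p + 1) / (p + 1)) + ε * h ^ 2 := by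
  obtain ⟨C, hC⟩ := S.Ub
  have hp := S.hp
  have hC0 : 0 ≤ C := (S.Un 0 0).trans (hC 0 0)
  set K := p * C ^ (p - 1) + 1 with hK
  have hK0 : 0 < K := by have := Real.rpow_nonneg hC0 (p - 1); positivity
  obtain ⟨δ, hδ, ho⟩ := S.osc (ε := √(ε / K)) (by positivity)
  refine ⟨δ, hδ, ?_⟩
  intro h hh hhδ t ht hth
  set e := √(ε / K) * √h with he
  have he0 : 0 ≤ e := by positivity
  have he2 : K * e ^ 2 = ε * h := by
    rw [he, mul_pow, Real.sq_sqrt (by positivity), Real.sq_sqrt hh.le]; field_simp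
  have hosc : ∀ y ∈ Icc t (t + h), |U y 0 - U t 0| ≤ e := by
    intro y hy
    refine (ho t ht y ⟨ht.1.trans hy.1, hy.2.trans hth.2⟩ hy.1 (by linarith [hy.2])).trans ?_
    rw [he]
    gcongr
    linarith [hy.2]
  have hf : Continuous fun y => U y 0 ^ p := (S.Ucx 0).rpow_const (fun _ => Or.inr (by linarith))
  have e1 : -(∫ y in t..(t + h), R y 0) = ∫ y in t..(t + h), U y 0 ^ p := by
    rw [← intervalIntegral.integral_neg]
    refine intervalIntegral.integral_congr fun y hy => ?_
    rw [uIcc_of_le (by linarith)] at hy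
    simp [S.bc y ⟨ht.1.trans hy.1, hy.2.trans hth.2⟩]
  have e2 : |(∫ y in t..(t + h), U y 0 ^ p) - h * U t 0 ^ p| ≤ K * e * h := by
    have : (∫ y in t..(t + h), U y 0 ^ p) - h * U t 0 ^ p =
        ∫ y in t..(t + h), (U y 0 ^ p - U t 0 ^ p) := by
      rw [intervalIntegral.integral_sub (hf.intervalIntegrable _ _) (by simp),
        intervalIntegral.integral_const]; simp
    rw [this]
    have h' : |t + h - t| = h := by rw [add_sub_cancel_left, abs_of_pos hh]
    rw [← Real.norm_eq_abs]
    conv_rhs => rw [← h']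
    refine intervalIntegral.norm_integral_le_of_norm_le_const fun y hy => ?_
    rw [uIoc_of_le (by linarith)] at hy
    refine (rpow_lip hp ⟨S.Un t 0, hC t 0⟩ ⟨S.Un y 0, hC y 0⟩).trans ?_
    have := hosc y ⟨hy.1.le, hy.2⟩
    gcongr
    linarith
  have e3 := hosc (t + h) ⟨by linarith, le_rfl⟩
  have e4 := rpow_tangent hp (S.Un t 0) (S.Un (t + h) 0)
  rw [e1]
  have e5 : ((∫ y in t..(t + h), U y 0 ^ p) - h * U t 0 ^ p) * (U (t + h) 0 - U t 0)
      ≤ ε * h ^ 2 := by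
    refine (le_abs_self _).trans ?_
    rw [abs_mul]
    calc _ ≤ (K * e * h) * e := by gcongr
      _ = (K * e ^ 2) * h := by ring
      _ = _ := by rw [he2]; ring
  nlinarith

lemma J_lim (S : Strip p a b σ U R) {t L : ℝ} (ht : t ∈ Ico a b) (hL0 : 0 ≤ L) :
    Tendsto (fun h => (∫ x in (0:ℝ)..L, (Pf σ U R t (t + h) x) ^ 2) / h ^ 2) (𝓝[>] 0)
      (𝓝 (∫ x in (0:ℝ)..L, Gx σ R t x ^ 2)) := by
  obtain ⟨C, hC⟩ := S.Rb
  have hC0 : 0 ≤ C := (abs_nonneg _).trans (hC 0 0)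
  simp only [← intervalIntegral.integral_div, ← div_pow]
  refine intervalIntegral.tendsto_integral_filter_of_dominated_convergence
    (fun _ => C ^ 2) ?_ ?_ (by simp) ?_
  · exact Eventually.of_forall fun h =>
      (((S.Pf_cont t (t + h)).div_const _).pow 2).aestronglyMeasurable
  · filter_upwards [Ioo_mem_nhdsGT (show (0:ℝ) < b - t by linarith [ht.2])] with h hh
    refine Eventually.of_forall fun x hx => ?_
    rw [uIoc_of_le hL0] at hx
    have b1 := S.Pf_abs hC ⟨ht.1, ht.2.le⟩ (t' := t + h) ⟨by linarith [ht.1, hh.1], by linarith [hh.2]⟩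
      (by linarith [hh.1]) hx.1.le
    rw [add_sub_cancel_left] at b1
    rw [Real.norm_eq_abs, abs_pow, abs_div, abs_of_pos hh.1]
    have : |Pf σ U R t (t + h) x| / h ≤ C := by rwa [div_le_iff₀ hh.1]
    exact pow_le_pow_left₀ (div_nonneg (abs_nonneg _) hh.1.le) this 2
  · refine Eventually.of_forall fun x hx => ?_
    rw [uIoc_of_le hL0] at hx
    have d := (hasDerivWithinAt_iff_tendsto_slope' (by simp)).1 (S.Pf_deriv t ht hx.1.le)
    have sh : Tendsto (fun h => t + h) (𝓝[>] 0) (𝓝[>] t) := by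
      refine tendsto_nhdsWithin_iff.2 ⟨?_, ?_⟩
      · have : Tendsto (fun h => t + h) (𝓝 0) (𝓝 (t + 0)) := (continuous_const.add continuous_id).tendsto 0
        rw [add_zero] at this
        exact this.mono_left nhdsWithin_le_nhds
      · filter_upwards [self_mem_nhdsWithin] with h hh
        simpa using hh
    refine ((d.comp sh).pow 2).congr fun h => ?_
    simp only [Function.comp, slope_def_field]
    simp [Pf]

theorem energy_ineq (S : Strip p a b σ U R) {t1 t2 L r : ℝ} (h1 : a ≤ t1) (h12 : t1 ≤ t2)
    (h2 : t2 < b) (hL : σ b ≤ L) (hr0 : 0 ≤ r) (hrL : r ≤ L) {θ : ℝ → ℝ} (hθ : Continuous θ) :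
    (∫ x in (0:ℝ)..L, Gx σ R t2 x ^ 2) / 2 - U t2 0 ^ (p + 1) / (p + 1) ≤
    (∫ x in (0:ℝ)..L, Gx σ R t1 x ^ 2) / 2 - U t1 0 ^ (p + 1) / (p + 1)
      - 2 * (∫ x in (0:ℝ)..r, θ x * (U t2 x - U t1 x)) + (t2 - t1) * ∫ x in (0:ℝ)..r, θ x ^ 2 := by
  have hL0 : 0 ≤ L := hr0.trans hrL
  have hp := S.hp
  set Θ := ∫ x in (0:ℝ)..r, θ x ^ 2 with hΘ
  set k : ℝ → ℝ := fun t => U t 0 ^ (p + 1) / (p + 1) - 2 * ∫ x in (0:ℝ)..r, θ x * U t x with hk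
  have kc : Continuous k := by
    refine Continuous.sub ?_ (continuous_const.mul ?_)
    · exact ((S.Ucx 0).rpow_const (fun _ => Or.inr (by linarith))).div_const _
    · refine intervalIntegral.continuous_parametric_intervalIntegral_of_continuous'
        (f := fun t x => θ x * U t x) ?_ 0 r
      exact (hθ.comp continuous_snd).mul S.Uc
  have cθ : ∀ t, Continuous fun x => θ x * U t x := fun t => hθ.mul (S.Uct t)
  have ksub : ∀ t t', k t' - k t = (U t' 0 ^ (p + 1) / (p + 1) - U t 0 ^ (p + 1) / (p + 1)) -
      2 * ∫ x in (0:ℝ)..r, θ x * (U t' x - U t x) := by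
    intro t t'
    simp only [mul_sub, hk]
    rw [intervalIntegral.integral_sub ((cθ _).intervalIntegrable _ _)
      ((cθ _).intervalIntegrable _ _)]
    ring
  have main : ∀ ε > 0, (∫ x in (0:ℝ)..L, Gx σ R t2 x ^ 2) ≤
      (∫ x in (0:ℝ)..L, Gx σ R t1 x ^ 2) + 2 * (k t2 - k t1) + 2 * (ε + Θ) * (t2 - t1) := by
    intro ε hε
    obtain ⟨δ, hδ, hb⟩ := S.bdry hε
    have T2 := S.J_lim (t := t2) (L := L) ⟨h1.trans h12, h2⟩ hL0
    have T1 := S.J_lim (t := t1) (L := L) ⟨h1, by linarith⟩ hL0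
    refine le_of_tendsto_of_tendsto T2
      ((T1.add ((avg_shift kc t1 t2).const_mul 2)).add_const (2 * (ε + Θ) * (t2 - t1))) ?_
    filter_upwards [Ioo_mem_nhdsGT (lt_min hδ (sub_pos.2 h2))] with h hh
    have hh0 := hh.1
    have hhδ : h ≤ δ := hh.2.le.trans (min_le_left _ _)
    have hhb : t2 + h < b := by have := hh.2.trans_le (min_le_right _ _); linarith
    have kc' : Continuous fun t => k (t + h) - k t := (kc.comp (by fun_prop)).sub kc
    have := image_le_of_deriv_right_le_deriv_boundary (a := t1) (b := t2)
      (f := fun y => ∫ x in (0:ℝ)..L, (Pf σ U R y (y + h) x) ^ 2)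
      (f' := fun t => ∫ x in (0:ℝ)..L, 2 * Pf σ U R t (t + h) x * (Gx σ R (t + h) x - Gx σ R t x))
      (S.J_cont h L).continuousOn
      (fun t ht => (S.J_deriv hh0 (h1.trans ht.1) (by linarith [ht.2]) hL0).Ici_of_Ioi)
      (B := fun y => (∫ x in (0:ℝ)..L, (Pf σ U R t1 (t1 + h) x) ^ 2) +
        (2 * h * (∫ t in t1..y, (k (t + h) - k t)) + 2 * h ^ 2 * (ε + Θ) * (y - t1)))
      (B' := fun t => 2 * h * (k (t + h) - k t) + 2 * h ^ 2 * (ε + Θ))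
      (by simp)
      (by
        refine (continuous_const.add ((continuous_const.mul ?_).add (by fun_prop))).continuousOn
        exact continuous_iff_continuousAt.2 fun x => (hasDeriv_int kc' t1 x).continuousAt)
      (by
        intro t ht
        have d := ((hasDeriv_int kc' t1 t).const_mul (2 * h)).add
          (((hasDerivAt_id t).sub_const t1).const_mul (2 * h ^ 2 * (ε + Θ)))
        rw [mul_one] at d
        exact (d.const_add _).hasDerivWithinAt)
      (by
        intro t ht
        refine (S.J_deriv_le hh0 (h1.trans ht.1) (by linarith [ht.2]) hL hr0 hrL hθ).trans ?_
        have := hb h hh0 hhδ t ⟨h1.trans ht.1, by linarith [ht.2]⟩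
          ⟨by linarith [ht.1], by linarith [ht.2]⟩
        rw [ksub]
        rw [← hΘ]
        nlinarith)
      (right_mem_Icc.2 h12)
    have h2p : 0 < h ^ 2 := by positivity
    rw [div_le_iff₀ h2p]
    refine this.trans (le_of_eq ?_)
    field_simp
    ring
  have fin : (∫ x in (0:ℝ)..L, Gx σ R t2 x ^ 2) ≤
      (∫ x in (0:ℝ)..L, Gx σ R t1 x ^ 2) + 2 * (k t2 - k t1) + 2 * Θ * (t2 - t1) := by
    refine le_of_forall_pos_le_add fun ε hε => ?_
    have := main (ε / (2 * (t2 - t1 + 1))) (by have : 0 < t2 - t1 + 1 := by linarith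
                                               positivity)
    have h3 : 2 * (ε / (2 * (t2 - t1 + 1))) * (t2 - t1) ≤ ε := by
      have : 0 < t2 - t1 + 1 := by linarith
      have e : 2 * (ε / (2 * (t2 - t1 + 1))) * (t2 - t1) = ε * ((t2 - t1) / (t2 - t1 + 1)) := by
        field_simp
      rw [e]
      have : (t2 - t1) / (t2 - t1 + 1) ≤ 1 := by rw [div_le_one this]; linarith
      nlinarith
    nlinarith
  rw [ksub] at fin
  linarith

end Strip

namespace IsSolOn
variable {p s₀ T : ℝ} {φ s : ℝ → ℝ} {u : ℝ → ℝ → ℝ}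

lemma u_slice (H : IsSolOn p s₀ φ T s u) {t : ℝ} (ht : t ∈ Icc 0 T) :
    ContinuousOn (u t) (Icc 0 (s t)) :=
  H.u_cont.comp (f := fun x : ℝ => (t, x)) (by fun_prop) (fun x hx => ⟨ht, hx⟩)

lemma ux_slice (H : IsSolOn p s₀ φ T s u) {t : ℝ} (ht : t ∈ Ioc 0 T) :
    ContinuousOn (deriv (u t)) (Icc 0 (s t)) :=
  H.ux_cont.comp (f := fun x : ℝ => (t, x)) (by fun_prop) (fun x hx => ⟨ht, hx⟩)

lemma ux_free (H : IsSolOn p s₀ φ T s u) {t : ℝ} (ht : t ∈ Ioc 0 T) :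
    deriv (u t) (s t) ≤ 0 := by
  by_contra! hc
  have hs := H.s_pos t ⟨ht.1.le, ht.2⟩
  have hcw := H.ux_slice ht (s t) ⟨hs.le, le_rfl⟩
  have hev := hcw.eventually (lt_mem_nhds hc)
  obtain ⟨δ, hδ, hb⟩ := Metric.mem_nhdsWithin_iff.1 hev
  set c := max 0 (s t - δ / 2) with hcd
  have hc0 : 0 ≤ c := le_max_left _ _
  have hcs : c < s t := max_lt hs (by linarith)
  have hcδ : s t - δ / 2 ≤ c := le_max_right _ _
  have hm : StrictMonoOn (u t) (Icc c (s t)) := by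
    apply strictMonoOn_of_deriv_pos (convex_Icc _ _)
      ((H.u_slice ⟨ht.1.le, ht.2⟩).mono (Icc_subset_Icc_left hc0))
    intro x hx
    rw [interior_Icc] at hx
    refine hb ⟨?_, hc0.trans hx.1.le, hx.2.le⟩
    rw [Metric.mem_ball, Real.dist_eq, abs_lt]
    constructor <;> linarith [hx.1, hx.2]
  have h1 := hm ⟨le_rfl, hcs.le⟩ ⟨hcs.le, le_rfl⟩ hcs
  rw [H.bc_free t ht] at h1
  exact absurd (H.u_nonneg t ⟨ht.1.le, ht.2⟩ c ⟨hc0, hcs.le⟩) (not_le.2 h1)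

lemma s_mono (H : IsSolOn p s₀ φ T s u) : MonotoneOn s (Icc 0 T) := by
  apply monotoneOn_of_deriv_nonneg (convex_Icc _ _) H.s_cont
  · intro x hx
    rw [interior_Icc] at hx
    exact (H.s_diff x ⟨hx.1, hx.2.le⟩).differentiableWithinAt
  · intro x hx
    rw [interior_Icc] at hx
    rw [H.stefan x ⟨hx.1, hx.2.le⟩]
    linarith [H.ux_free ⟨hx.1, hx.2.le⟩]
end IsSolOn

def cl (a b t : ℝ) : ℝ := max a (min t b)
def sσ (s : ℝ → ℝ) (a b t : ℝ) : ℝ := s (cl a b t)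
def sU (s : ℝ → ℝ) (u : ℝ → ℝ → ℝ) (a b t x : ℝ) : ℝ := u (cl a b t) (max 0 (min x (sσ s a b t)))
def sR (s : ℝ → ℝ) (u : ℝ → ℝ → ℝ) (a b t x : ℝ) : ℝ :=
  deriv (u (cl a b t)) (max 0 (min x (sσ s a b t)))

lemma cl_mem {a b : ℝ} (h : a ≤ b) (t : ℝ) : cl a b t ∈ Icc a b :=
  ⟨le_max_left _ _, max_le h (min_le_right _ _)⟩
lemma cl_eq {a b t : ℝ} (h : t ∈ Icc a b) : cl a b t = t := by
  rw [cl, min_eq_left h.2, max_eq_right h.1]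
lemma cl_cont (a b : ℝ) : Continuous (cl a b) := by unfold cl; fun_prop
lemma cl_mono (a b : ℝ) : Monotone (cl a b) := fun x y h =>
  max_le_max le_rfl (min_le_min h le_rfl)
lemma sσ_eq {s : ℝ → ℝ} {a b t : ℝ} (h : t ∈ Icc a b) : sσ s a b t = s t := by
  rw [sσ, cl_eq h]
lemma sU_eq {s : ℝ → ℝ} {u : ℝ → ℝ → ℝ} {a b t x : ℝ} (h : t ∈ Icc a b) (hx : x ∈ Icc 0 (s t)) :
    sU s u a b t x = u t x := by
  rw [sU, sσ_eq h, cl_eq h, min_eq_left hx.2, max_eq_right hx.1]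
lemma sR_eq {s : ℝ → ℝ} {u : ℝ → ℝ → ℝ} {a b t x : ℝ} (h : t ∈ Icc a b) (hx : x ∈ Icc 0 (s t)) :
    sR s u a b t x = deriv (u t) x := by
  rw [sR, sσ_eq h, cl_eq h, min_eq_left hx.2, max_eq_right hx.1]

namespace IsSolOn
variable {p s₀ a b : ℝ} {φ s : ℝ → ℝ} {u : ℝ → ℝ → ℝ}

lemma sσ_cont (H : IsSolOn p s₀ φ b s u) (ha : 0 < a) (hab : a < b) : Continuous (sσ s a b) := by
  unfold sσ
  exact H.s_cont.comp_continuous (cl_cont a b) fun t =>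
    ⟨ha.le.trans (cl_mem hab.le t).1, (cl_mem hab.le t).2⟩

lemma clamp_cont (H : IsSolOn p s₀ φ b s u) (ha : 0 < a) (hab : a < b) :
    Continuous (fun q : ℝ × ℝ => (cl a b q.1, max 0 (min q.2 (sσ s a b q.1)))) := by
  have h1 := H.sσ_cont ha hab
  have h2 := cl_cont a b
  fun_prop

lemma clamp_mem (H : IsSolOn p s₀ φ b s u) (ha : 0 < a) (hab : a < b) (t x : ℝ) :
    max 0 (min x (sσ s a b t)) ∈ Icc 0 (s (cl a b t)) :=
  ⟨le_max_left _ _, max_le (H.s_pos _ ⟨ha.le.trans (cl_mem hab.le t).1, (cl_mem hab.le t).2⟩).le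
    (min_le_right _ _)⟩

lemma sU_cont (H : IsSolOn p s₀ φ b s u) (ha : 0 < a) (hab : a < b) :
    Continuous (fun q : ℝ × ℝ => sU s u a b q.1 q.2) :=
  H.u_cont.comp_continuous (H.clamp_cont ha hab) fun q =>
    ⟨⟨ha.le.trans (cl_mem hab.le _).1, (cl_mem hab.le _).2⟩, H.clamp_mem ha hab _ _⟩

lemma sR_cont (H : IsSolOn p s₀ φ b s u) (ha : 0 < a) (hab : a < b) :
    Continuous (fun q : ℝ × ℝ => sR s u a b q.1 q.2) :=
  H.ux_cont.comp_continuous (H.clamp_cont ha hab) fun q =>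
    ⟨⟨ha.trans_le (cl_mem hab.le _).1, (cl_mem hab.le _).2⟩, H.clamp_mem ha hab _ _⟩

lemma clamp_bdd (H : IsSolOn p s₀ φ b s u) (ha : 0 < a) (hab : a < b) {F : ℝ → ℝ → ℝ}
    (hF : Continuous (fun q : ℝ × ℝ => F q.1 q.2))
    (hc : ∀ t x, F t x = F (cl a b t) (max 0 (min x (sσ s a b t)))) :
    ∃ C, ∀ t x, |F t x| ≤ C := by
  have hK : IsCompact (Icc a b ×ˢ Icc 0 (s b)) := isCompact_Icc.prod isCompact_Icc
  obtain ⟨C, hC⟩ := hK.exists_bound_of_continuousOn hF.continuousOn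
  refine ⟨C, fun t x => ?_⟩
  rw [hc]
  refine hC (_, _) ⟨cl_mem hab.le t, ?_⟩
  have h1 := H.clamp_mem ha hab t x
  refine ⟨h1.1, h1.2.trans (H.s_mono ⟨ha.le.trans (cl_mem hab.le _).1, (cl_mem hab.le _).2⟩
    ⟨(ha.trans hab).le, le_rfl⟩ (cl_mem hab.le _).2)⟩

lemma strip (H : IsSolOn p s₀ φ b s u) (hp : 1 < p) (ha : 0 < a) (hab : a < b) :
    Strip p a b (sσ s a b) (sU s u a b) (sR s u a b) := by
  have hI : ∀ {t}, t ∈ Icc a b → t ∈ Ioc 0 b := fun h => ⟨ha.trans_le h.1, h.2⟩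
  have hI' : ∀ {t}, t ∈ Icc a b → t ∈ Icc 0 b := fun h => ⟨ha.le.trans h.1, h.2⟩
  have hRc := H.sR_cont ha hab
  have hUc := H.sU_cont ha hab
  have hRx : ∀ x, Continuous fun t => sR s u a b t x := fun x =>
    hRc.comp (by fun_prop : Continuous fun t : ℝ => (t, x))
  have hUt : ∀ t, Continuous (sU s u a b t) := fun t =>
    hUc.comp (by fun_prop : Continuous fun x : ℝ => (t, x))
  have hcc : ∀ t x, sσ s a b (cl a b t) = sσ s a b t ∧ cl a b (cl a b t) = cl a b t ∧
      max 0 (min (max 0 (min x (sσ s a b t))) (sσ s a b t)) = max 0 (min x (sσ s a b t)) := by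
    intro t x
    have e1 := cl_eq (cl_mem hab.le t)
    refine ⟨by rw [sσ, e1, sσ], e1, ?_⟩
    have : max 0 (min x (sσ s a b t)) ∈ Icc 0 (sσ s a b t) := H.clamp_mem ha hab t x
    rw [min_eq_left this.2, max_eq_right this.1]
  refine ⟨hab, hp, H.sσ_cont ha hab, ?_, ?_, hUc, hRc, ?_, ?_, ?_, ?_, ?_, ?_, ?_, ?_⟩
  · intro t t' h
    exact H.s_mono (hI' (cl_mem hab.le _)) (hI' (cl_mem hab.le _)) (cl_mono a b h)
  · intro t; exact H.s_pos _ (hI' (cl_mem hab.le _))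
  · intro t x
    exact H.u_nonneg _ (hI' (cl_mem hab.le _)) _ (H.clamp_mem ha hab t x)
  · intro t x hx
    have h0 : 0 ≤ sσ s a b t := (H.s_pos _ (hI' (cl_mem hab.le _))).le
    rw [sU, min_eq_right hx, max_eq_right h0, sσ]
    exact H.bc_free _ (hI (cl_mem hab.le _))
  · refine H.clamp_bdd ha hab hRc fun t x => ?_
    obtain ⟨h1, h2, h3⟩ := hcc t x
    rw [sR, sR, h1, h2, h3]
  · obtain ⟨C, hC⟩ := H.clamp_bdd ha hab hUc fun t x => by
      obtain ⟨h1, h2, h3⟩ := hcc t x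
      rw [sU, sU, h1, h2, h3]
    exact ⟨C, fun t x => (le_abs_self _).trans (hC t x)⟩
  · intro t ht x hx
    rw [sσ_eq ht] at hx
    rw [sR_eq ht ⟨hx.1.le, hx.2.le⟩]
    refine (H.ux_diff t (hI ht) x hx).hasDerivAt.congr_of_eventuallyEq ?_
    filter_upwards [Ioo_mem_nhds hx.1 hx.2] with z hz
    exact sU_eq ht ⟨hz.1.le, hz.2.le⟩
  · intro t ht
    have h0 : (0:ℝ) ∈ Icc 0 (s t) := ⟨le_rfl, (H.s_pos t (hI' ht)).le⟩
    rw [sR_eq ht h0, sU_eq ht h0, ← H.bc_zero t (hI ht), neg_neg]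
  · intro t ht t' ht' htt y hy
    rw [sσ_eq ht] at hy
    have hsub : ∀ τ ∈ Icc t t', τ ∈ Icc a b := fun τ h => ⟨ht.1.trans h.1, h.2.trans ht'.2⟩
    have hsm : ∀ τ ∈ Icc t t', s t ≤ s τ := fun τ h =>
      H.s_mono (hI' ht) (hI' (hsub τ h)) h.1
    have hQ : Continuous fun y => ∫ τ in t..t', sR s u a b τ y := by
      apply intervalIntegral.continuous_parametric_intervalIntegral_of_continuous'
      exact hRc.comp (by fun_prop : Continuous fun q : ℝ × ℝ => (q.2, q.1))
    have hder : ∀ z ∈ Ioo 0 (s t), HasDerivAt (fun y => ∫ τ in t..t', sR s u a b τ y)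
        (sU s u a b t' z - sU s u a b t z) z := by
      intro z hz
      obtain ⟨ε, hε, h1, h2⟩ : ∃ ε > 0, 0 < z - ε ∧ z + ε < s t := by
        refine ⟨min z (s t - z) / 2, ?_, ?_, ?_⟩
        · have := lt_min hz.1 (sub_pos.2 hz.2); linarith
        · have := min_le_left z (s t - z); linarith [hz.1]
        · have := min_le_right z (s t - z); linarith [hz.2]
      have hcu : ContinuousOn (fun q : ℝ × ℝ => deriv (deriv (u q.1)) q.2)
          (Icc t t' ×ˢ Icc (z - ε) (z + ε)) := by
        refine H.uxx_cont.mono ?_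
        rintro ⟨τ, w⟩ ⟨hτ, hw⟩
        exact ⟨hI (hsub τ hτ), by linarith [hw.1], by linarith [hw.2, hsm τ hτ]⟩
      obtain ⟨C, hC⟩ := (isCompact_Icc.prod isCompact_Icc).exists_bound_of_continuousOn hcu
      have hcz : ContinuousOn (fun τ => deriv (deriv (u τ)) z) (Icc t t') :=
        hcu.comp (f := fun τ : ℝ => (τ, z)) (by fun_prop)
          (fun τ hτ => ⟨hτ, by linarith, by linarith⟩)
      have key := intervalIntegral.hasDerivAt_integral_of_dominated_loc_of_deriv_le
        (F := fun y τ => sR s u a b τ y) (F' := fun y τ => deriv (deriv (u τ)) y)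
        (μ := volume) (a := t) (b := t') (x₀ := z) (bound := fun _ => C)
        (s := Ioo (z - ε) (z + ε)) (Ioo_mem_nhds (by linarith) (by linarith))
        (Eventually.of_forall fun y => (hRx y).aestronglyMeasurable)
        ((hRx z).intervalIntegrable _ _)
        (by
          rw [uIoc_of_le htt]
          exact (hcz.mono Ioc_subset_Icc_self).aestronglyMeasurable measurableSet_Ioc)
        (Eventually.of_forall fun τ hτ w hw => by
          rw [uIoc_of_le htt] at hτ
          exact hC (τ, w) ⟨⟨hτ.1.le, hτ.2⟩, hw.1.le, hw.2.le⟩)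
        (by simp)
        (Eventually.of_forall fun τ hτ w hw => by
          rw [uIoc_of_le htt] at hτ
          have hτ' : τ ∈ Icc t t' := ⟨hτ.1.le, hτ.2⟩
          have hw' : w ∈ Ioo 0 (s τ) := ⟨by linarith [hw.1], by linarith [hw.2, hsm τ hτ']⟩
          refine (H.uxx_diff τ (hI (hsub τ hτ')) w hw').hasDerivAt.congr_of_eventuallyEq ?_
          filter_upwards [Ioo_mem_nhds hw'.1 hw'.2] with v hv
          exact sR_eq (hsub τ hτ') ⟨hv.1.le, hv.2.le⟩)
      have hint : ∫ τ in t..t', deriv (deriv (u τ)) z = sU s u a b t' z - sU s u a b t z := by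
        rw [sU_eq ht' ⟨hz.1.le, hz.2.le.trans (hsm t' ⟨htt, le_rfl⟩)⟩, sU_eq ht ⟨hz.1.le, hz.2.le⟩]
        apply intervalIntegral.integral_eq_sub_of_hasDerivAt (f := fun τ => u τ z)
        · intro τ hτ
          rw [uIcc_of_le htt] at hτ
          have hz' : z ∈ Ioo 0 (s τ) := ⟨hz.1, hz.2.trans_le (hsm τ hτ)⟩
          rw [← H.heat τ (hI (hsub τ hτ)) z hz']
          exact (H.ut_diff τ (hI (hsub τ hτ)) z hz').hasDerivAt
        · exact hcz.intervalIntegrable_of_Icc htt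
      rw [← hint]
      exact key.2
    rw [intervalIntegral.integral_eq_sub_of_hasDerivAt_of_le hy.1 hQ.continuousOn
      (fun z hz => hder z ⟨hz.1, hz.2.trans_le hy.2⟩)
      (((hUt t').sub (hUt t)).intervalIntegrable _ _),
      intervalIntegral.integral_sub ((hRx y).intervalIntegrable _ _)
        ((hRx 0).intervalIntegrable _ _)]
  · intro t ht t' ht' htt
    have hsub : ∀ τ ∈ Icc t t', τ ∈ Icc a b := fun τ h => ⟨ht.1.trans h.1, h.2.trans ht'.2⟩
    rw [sσ_eq ht, sσ_eq ht', ← intervalIntegral.integral_neg]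
    symm
    have : ∫ τ in t..t', -sR s u a b τ (sσ s a b τ) = ∫ τ in t..t', deriv s τ := by
      apply intervalIntegral.integral_congr
      intro τ hτ
      rw [uIcc_of_le htt] at hτ
      have h1 := hsub τ hτ
      simp only
      rw [sσ_eq h1, sR_eq h1 ⟨(H.s_pos τ (hI' h1)).le, le_rfl⟩, H.stefan τ (hI h1)]
    rw [this]
    apply intervalIntegral.integral_eq_sub_of_hasDerivAt
    · intro τ hτ
      rw [uIcc_of_le htt] at hτ
      exact (H.s_diff τ (hI (hsub τ hτ))).hasDerivAt
    · exact (H.s_deriv_cont.mono fun τ hτ => hI (hsub τ hτ)).intervalIntegrable_of_Icc htt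

end IsSolOn

lemma deriv_deriv_nonpos_of_isLocalMax {f : ℝ → ℝ} {x : ℝ} (hm : IsLocalMax f x)
    (hc : ContinuousAt f x) : deriv (deriv f) x ≤ 0 := by
  by_contra! h
  have hmin := isLocalMin_of_deriv_deriv_pos h hm.deriv_eq_zero hc
  have heq : f =ᶠ[𝓝 x] fun _ => f x := by
    filter_upwards [hm, hmin] with y h1 h2
    exact le_antisymm h1 h2
  have h2 := heq.deriv.deriv_eq
  simp at h2
  linarith

lemma quad_deriv (A b c e y : ℝ) :
    HasDerivAt (fun y : ℝ => A + b * y + c * y ^ 2 + e) (b + 2 * c * y) y := by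
  have := ((((hasDerivAt_id y).const_mul b).const_add A).add
    (((hasDerivAt_id y).pow 2).const_mul c)).add_const e
  refine this.congr_deriv ?_
  simp only [id]
  norm_num
  ring

namespace IsSolOn
variable {p s₀ T : ℝ} {φ s : ℝ → ℝ} {u : ℝ → ℝ → ℝ}

lemma compactK (H : IsSolOn p s₀ φ T s u) :
    IsCompact {q : ℝ × ℝ | q.1 ∈ Icc 0 T ∧ q.2 ∈ Icc 0 (s q.1)} := by
  have h1 : IsCompact (Icc (0:ℝ) T ×ˢ Icc (0:ℝ) 1) := isCompact_Icc.prod isCompact_Icc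
  have hc : ContinuousOn (fun q : ℝ × ℝ => (q.1, q.2 * s q.1)) (Icc (0:ℝ) T ×ˢ Icc (0:ℝ) 1) := by
    refine continuousOn_fst.prodMk (continuousOn_snd.mul ?_)
    exact H.s_cont.comp continuousOn_fst fun q hq => hq.1
  convert h1.image_of_continuousOn hc using 1
  ext ⟨t, x⟩
  simp only [mem_setOf_eq, mem_image, mem_prod, Prod.exists, Prod.mk.injEq]
  constructor
  · rintro ⟨ht, hx⟩
    have := H.s_pos t ht
    exact ⟨t, x / s t, ⟨ht, div_nonneg hx.1 this.le, (div_le_one this).2 hx.2⟩, rfl, by field_simp⟩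
  · rintro ⟨t, y, ⟨ht, hy⟩, rfl, rfl⟩
    have := H.s_pos t ht
    exact ⟨ht, mul_nonneg hy.1 this.le, by nlinarith [hy.2]⟩

lemma max_prin (H : IsSolOn p s₀ φ T s u) {A b c d : ℝ} (hd : 2 * c < d)
    (hi : ∀ x ∈ Icc 0 s₀, φ x ≤ A + b * x + c * x ^ 2)
    (hs : ∀ t ∈ Ioc 0 T, 0 ≤ A + b * s t + c * s t ^ 2 + d * t)
    (hb : ∀ t ∈ Ioc 0 T, b < deriv (u t) 0 ∨ u t 0 ≤ A + d * t) :
    ∀ t ∈ Icc 0 T, ∀ x ∈ Icc 0 (s t), u t x ≤ A + b * x + c * x ^ 2 + d * t := by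
  have hne : ({q : ℝ × ℝ | q.1 ∈ Icc 0 T ∧ q.2 ∈ Icc 0 (s q.1)}).Nonempty :=
    ⟨(0, 0), ⟨le_rfl, H.T_pos.le⟩, le_rfl, (H.s_pos 0 ⟨le_rfl, H.T_pos.le⟩).le⟩
  have hcz : ContinuousOn (fun q : ℝ × ℝ => u q.1 q.2 - (A + b * q.2 + c * q.2 ^ 2 + d * q.1))
      {q : ℝ × ℝ | q.1 ∈ Icc 0 T ∧ q.2 ∈ Icc 0 (s q.1)} := by
    refine H.u_cont.sub (Continuous.continuousOn ?_)
    fun_prop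
  obtain ⟨⟨t, x⟩, ⟨ht, hx⟩, hmax⟩ := H.compactK.exists_isMaxOn hne hcz
  simp only at ht hx
  have hmax' : ∀ τ ∈ Icc 0 T, ∀ y ∈ Icc 0 (s τ), u τ y - (A + b * y + c * y ^ 2 + d * τ) ≤
      u t x - (A + b * x + c * x ^ 2 + d * t) := fun τ hτ y hy =>
    hmax (a := (τ, y)) ⟨hτ, hy⟩
  suffices hz : u t x - (A + b * x + c * x ^ 2 + d * t) ≤ 0 by
    intro τ hτ y hy
    linarith [hmax' τ hτ y hy]
  by_contra! hpos
  have ht0 : 0 < t := by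
    rcases ht.1.eq_or_lt with h | h
    · exfalso
      subst h
      rw [H.init_s] at hx
      rw [H.init x hx] at hpos
      linarith [hi x hx]
    · exact h
  have htI : t ∈ Ioc 0 T := ⟨ht0, ht.2⟩
  have hxs : x < s t := by
    rcases hx.2.eq_or_lt with h | h
    · exfalso
      subst h
      rw [H.bc_free t htI] at hpos
      linarith [hs t htI]
    · exact h
  have hx0 : 0 < x := by
    rcases hx.1.eq_or_lt with h | h
    · exfalso
      subst h
      rcases hb t htI with h1 | h1
      · have hcw := (H.ux_slice htI).sub (by fun_prop : ContinuousOn (fun y : ℝ => b + 2 * c * y) _)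
        have hev := (hcw 0 hx).eventually (lt_mem_nhds (a := 0) (by simpa using h1))
        obtain ⟨δ, hδ, hbb⟩ := Metric.mem_nhdsWithin_iff.1 hev
        set e := min (s t) (δ / 2) with he
        have he0 : 0 < e := lt_min hxs (by linarith)
        have hes : e ≤ s t := min_le_left _ _
        have heδ : e ≤ δ / 2 := min_le_right _ _
        have hm : StrictMonoOn (fun y => u t y - (A + b * y + c * y ^ 2 + d * t)) (Icc 0 e) := by
          apply strictMonoOn_of_deriv_pos (convex_Icc _ _)
          · exact ((H.u_slice ht).mono (Icc_subset_Icc_right hes)).sub (by fun_prop)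
          · intro y hy
            rw [interior_Icc] at hy
            have hD := (H.ux_diff t htI y ⟨hy.1, hy.2.trans_le hes⟩).hasDerivAt
            have hW : HasDerivAt (fun y : ℝ => A + b * y + c * y ^ 2 + d * t) (b + 2 * c * y) y := quad_deriv A b c (d * t) y
            have := (hD.sub hW).deriv
            rw [show (fun y => u t y - (A + b * y + c * y ^ 2 + d * t))
              = (u t - fun y : ℝ => A + b * y + c * y ^ 2 + d * t) from rfl, this]
            refine hbb ⟨?_, hy.1.le, hy.2.le.trans hes⟩
            rw [Metric.mem_ball, Real.dist_eq, abs_lt]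
            constructor <;> linarith [hy.1, hy.2]
        have h2 := hm ⟨le_rfl, he0.le⟩ ⟨he0.le, le_rfl⟩ he0
        have h3 := hmax' t ht e ⟨he0.le, hes⟩
        simp only at h2
        linarith
      · simp at hpos
        linarith
    · exact h
  have hxI : x ∈ Ioo 0 (s t) := ⟨hx0, hxs⟩
  -- time derivative
  have h1 : 0 ≤ deriv (fun τ => u τ x) t - d := by
    have hD : HasDerivAt (fun τ => u τ x - d * τ) (deriv (fun τ => u τ x) t - d) t := by
      have h9 : HasDerivAt (fun τ : ℝ => d * τ) d t := by
        simpa using (hasDerivAt_id t).const_mul d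
      exact (H.ut_diff t htI x hxI).hasDerivAt.sub h9
    have hsl := (hasDerivAt_iff_tendsto_slope.1 hD).mono_left
      (nhdsWithin_mono t (show Iio t ⊆ {t}ᶜ from fun y hy => ne_of_lt hy))
    refine ge_of_tendsto hsl ?_
    have hsc : ContinuousWithinAt s (Icc 0 T) t := H.s_cont t ht
    have hev : ∀ᶠ τ in 𝓝[Icc 0 T] t, x < s τ := hsc.eventually (lt_mem_nhds hxs)
    have hev2 : ∀ᶠ τ in 𝓝[<] t, x < s τ := by
      have hle : 𝓝[<] t ≤ 𝓝[Icc 0 T] t := by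
        rw [← nhdsWithin_Ioo_eq_nhdsLT ht0]
        exact nhdsWithin_mono _ fun y hy => ⟨hy.1.le, hy.2.le.trans ht.2⟩
      exact hle hev
    filter_upwards [hev2, Ioo_mem_nhdsLT ht0] with τ h1 h2
    have h3 := hmax' τ ⟨h2.1.le, h2.2.le.trans ht.2⟩ x ⟨hx0.le, h1.le⟩
    rw [slope_def_field]
    exact div_nonneg_of_nonpos (by linarith) (by linarith [h2.2])
  have h2 : deriv (deriv (u t)) x - 2 * c ≤ 0 := by
    set g := fun y => u t y - (A + b * y + c * y ^ 2 + d * t) with hg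
    have hgd : ∀ y ∈ Ioo 0 (s t), HasDerivAt g (deriv (u t) y - (b + 2 * c * y)) y := by
      intro y hy
      have hD := (H.ux_diff t htI y hy).hasDerivAt
      have hW : HasDerivAt (fun y : ℝ => A + b * y + c * y ^ 2 + d * t) (b + 2 * c * y) y := quad_deriv A b c (d * t) y
      exact hD.sub hW
    have hgm : IsLocalMax g x := by
      filter_upwards [Ioo_mem_nhds hx0 hxs] with y hy
      exact hmax' t ht y ⟨hy.1.le, hy.2.le⟩
    have h3 := deriv_deriv_nonpos_of_isLocalMax hgm (hgd x hxI).continuousAt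
    have heq : deriv g =ᶠ[𝓝 x] fun y => deriv (u t) y - (b + 2 * c * y) := by
      filter_upwards [Ioo_mem_nhds hx0 hxs] with y hy
      exact (hgd y hy).deriv
    rw [heq.deriv_eq] at h3
    have hW : HasDerivAt (fun y : ℝ => b + 2 * c * y) (2 * c) x := by
      simpa using ((hasDerivAt_id x).const_mul (2 * c)).const_add b
    have := ((H.uxx_diff t htI x hxI).hasDerivAt.sub hW).deriv
    rw [show (fun y => deriv (u t) y - (b + 2 * c * y))
      = (deriv (u t) - fun y : ℝ => b + 2 * c * y) from rfl, this] at h3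
    exact h3
  rw [H.heat t htI x hxI] at h1
  linarith

/-- Uniform bound from a bound at the fixed boundary. -/
lemma bound_of_bdry (H : IsSolOn p s₀ φ T s u) {A : ℝ} (hA : 0 ≤ A) (hi : ∀ x ∈ Icc 0 s₀, φ x ≤ A)
    (hb : ∀ t ∈ Ioc 0 T, u t 0 ≤ A) : ∀ t ∈ Icc 0 T, ∀ x ∈ Icc 0 (s t), u t x ≤ A := by
  intro t ht x hx
  have key : ∀ d : ℝ, 0 < d → u t x ≤ A + d * t := by
    intro d hd
    have := H.max_prin (A := A) (b := 0) (c := 0) (d := d) (by linarith)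
      (by simpa using hi)
      (fun t ht => by have := mul_nonneg hd.le ht.1.le; simp; linarith)
      (fun t ht => Or.inr (by have := mul_nonneg hd.le ht.1.le; linarith [hb t ht])) t ht x hx
    simpa using this
  refine le_of_forall_pos_le_add fun ε hε => ?_
  have := key (ε / T) (div_pos hε H.T_pos)
  have h2 : ε / T * t ≤ ε := by
    rw [div_mul_eq_mul_div, div_le_iff₀ H.T_pos]
    exact mul_le_mul_of_nonneg_left ht.2 hε.le
  linarith

end IsSolOn

namespace IsGlobalSol
variable {p s₀ : ℝ} {φ s : ℝ → ℝ} {u : ℝ → ℝ → ℝ}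

lemma s_mono (H : IsGlobalSol p s₀ φ s u) {t t' : ℝ} (h0 : 0 ≤ t) (h : t ≤ t') : s t ≤ s t' :=
  (H (t' + 1) (by linarith)).s_mono ⟨h0, by linarith⟩ ⟨by linarith, by linarith⟩ h

lemma s_pos (H : IsGlobalSol p s₀ φ s u) {t : ℝ} (h0 : 0 ≤ t) : 0 < s t :=
  (H (t + 1) (by linarith)).s_pos t ⟨h0, by linarith⟩

lemma s_ge (H : IsGlobalSol p s₀ φ s u) {t : ℝ} (h0 : 0 ≤ t) : s₀ ≤ s t := by
  rw [← (H 1 one_pos).init_s]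
  exact H.s_mono le_rfl h0

lemma u_nn (H : IsGlobalSol p s₀ φ s u) {t x : ℝ} (h0 : 0 ≤ t) (hx : x ∈ Icc 0 (s t)) : 0 ≤ u t x :=
  (H (t + 1) (by linarith)).u_nonneg t ⟨h0, by linarith⟩ x hx

lemma u0_nn (H : IsGlobalSol p s₀ φ s u) {t : ℝ} (h0 : 0 ≤ t) : 0 ≤ u t 0 :=
  H.u_nn h0 ⟨le_rfl, (H.s_pos h0).le⟩

lemma u0_cont (H : IsGlobalSol p s₀ φ s u) {a b : ℝ} (ha : 0 ≤ a) :
    ContinuousOn (fun t => u t 0) (Icc a b) := by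
  rcases lt_or_ge b a with h | h
  · rw [Icc_eq_empty (not_le.2 h)]; exact continuousOn_empty _
  · refine ((H (b + 1) (by linarith)).u_cont).comp (f := fun t : ℝ => (t, (0:ℝ))) (by fun_prop) ?_
    intro t ht
    exact ⟨⟨ha.trans ht.1, by linarith [ht.2]⟩, le_rfl, (H.s_pos (ha.trans ht.1)).le⟩

lemma Gx_int (H : IsGlobalSol p s₀ φ s u) {a b t L : ℝ} (ha : 0 < a) (hab : a < b)
    (ht : t ∈ Icc a b) (hL : s t ≤ L) :
    ∫ x in (0:ℝ)..L, Gx (sσ s a b) (sR s u a b) t x ^ 2 = ∫ x in (0:ℝ)..(s t), deriv (u t) x ^ 2 := by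
  have h0 := (H.s_pos (ha.le.trans ht.1)).le
  have e1 : (∫ x in (0:ℝ)..(s t), Gx (sσ s a b) (sR s u a b) t x ^ 2)
      = ∫ x in (0:ℝ)..(s t), deriv (u t) x ^ 2 := by
    apply intervalIntegral.integral_congr
    intro x hx
    rw [uIcc_of_le h0] at hx
    simp only [Gx, sσ_eq ht, hx.2, if_true, sR_eq ht hx]
  have e2 : (∫ x in (s t)..L, Gx (sσ s a b) (sR s u a b) t x ^ 2) = 0 := by
    rw [intervalIntegral.integral_of_le hL]
    apply setIntegral_eq_zero_of_forall_eq_zero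
    intro x hx
    simp [Gx, sσ_eq ht, not_le.2 hx.1]
  have e3 : ∀ x, Gx (sσ s a b) (sR s u a b) t x ^ 2 =
      {x | x ≤ sσ s a b t}.indicator (fun x => sR s u a b t x ^ 2) x := by
    intro x; simp only [Gx, indicator, mem_setOf_eq]; split_ifs <;> simp
  have hcR : Continuous (fun x => sR s u a b t x ^ 2) :=
    (((H b (ha.trans hab)).sR_cont ha hab).comp (by fun_prop : Continuous fun x : ℝ => (t, x))).pow 2
  have hii : ∀ c d, IntervalIntegrable (fun x => Gx (sσ s a b) (sR s u a b) t x ^ 2) volume c d := by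
    intro c d
    simp only [e3]
    exact indicator_ii hcR measurableSet_Iic c d
  rw [← intervalIntegral.integral_add_adjacent_intervals (hii 0 (s t)) (hii (s t) L), e1, e2, add_zero]

lemma energy_le (H : IsGlobalSol p s₀ φ s u) (hp : 1 < p) {t1 t2 r : ℝ} (h1 : 0 < t1) (h12 : t1 ≤ t2)
    (hr0 : 0 ≤ r) (hr : r ≤ s t1) {θ : ℝ → ℝ} (hθ : Continuous θ) :
    energy p s u t2 ≤ energy p s u t1 - 2 * (∫ x in (0:ℝ)..r, θ x * (u t2 x - u t1 x))
      + (t2 - t1) * ∫ x in (0:ℝ)..r, θ x ^ 2 := by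
  have hab : t1 < t2 + 1 := by linarith
  have S := (H (t2 + 1) (by linarith)).strip hp h1 hab
  have m1 : t1 ∈ Icc t1 (t2 + 1) := ⟨le_rfl, hab.le⟩
  have m2 : t2 ∈ Icc t1 (t2 + 1) := ⟨h12, by linarith⟩
  have m3 : t2 + 1 ∈ Icc t1 (t2 + 1) := ⟨hab.le, le_rfl⟩
  have l1 : s t1 ≤ s (t2 + 1) := H.s_mono h1.le hab.le
  have l2 : s t2 ≤ s (t2 + 1) := H.s_mono (by linarith) (by linarith)
  have l12 : s t1 ≤ s t2 := H.s_mono h1.le h12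
  have key := S.energy_ineq (t1 := t1) (t2 := t2) (L := s (t2 + 1)) (r := r) le_rfl h12 (by linarith)
    (by rw [sσ_eq m3]) hr0 (hr.trans l1) hθ
  have z1 : (0:ℝ) ∈ Icc 0 (s t1) := ⟨le_rfl, (H.s_pos h1.le).le⟩
  have z2 : (0:ℝ) ∈ Icc 0 (s t2) := ⟨le_rfl, (H.s_pos (h1.le.trans h12)).le⟩
  rw [H.Gx_int h1 hab m1 l1, H.Gx_int h1 hab m2 l2, sU_eq m1 z1, sU_eq m2 z2] at key
  have e : (∫ x in (0:ℝ)..r, θ x * (sU s u t1 (t2 + 1) t2 x - sU s u t1 (t2 + 1) t1 x))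
      = ∫ x in (0:ℝ)..r, θ x * (u t2 x - u t1 x) := by
    apply intervalIntegral.integral_congr
    intro x hx
    rw [uIcc_of_le hr0] at hx
    simp only
    rw [sU_eq m1 ⟨hx.1, hx.2.trans hr⟩, sU_eq m2 ⟨hx.1, hx.2.trans (hr.trans l12)⟩]
  rw [e] at key
  unfold energy
  linarith

lemma energy_anti (H : IsGlobalSol p s₀ φ s u) (hp : 1 < p) {t1 t2 : ℝ} (h1 : 0 < t1) (h12 : t1 ≤ t2) :
    energy p s u t2 ≤ energy p s u t1 := by
  have := H.energy_le hp h1 h12 le_rfl (H.s_pos h1.le).le (θ := fun _ => 0) continuous_const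
  simpa using this

lemma moment (H : IsGlobalSol p s₀ φ s u) (hp : 1 < p) {t1 t2 r : ℝ} (h1 : 0 < t1) (h12 : t1 ≤ t2)
    (hr0 : 0 ≤ r) (hr : r ≤ s t1) :
    ∫ x in (0:ℝ)..r, (r - x) * (u t2 x - u t1 x) =
      ∫ t in t1..t2, (u t r - u t 0 + r * u t 0 ^ p) := by
  have hab : t1 < t2 + 1 := by linarith
  have S := (H (t2 + 1) (by linarith)).strip hp h1 hab
  have m1 : t1 ∈ Icc t1 (t2 + 1) := ⟨le_rfl, hab.le⟩
  have m2 : t2 ∈ Icc t1 (t2 + 1) := ⟨h12, by linarith⟩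
  have l12 : s t1 ≤ s t2 := H.s_mono h1.le h12
  set σ := sσ s t1 (t2 + 1) with hσ
  set U := sU s u t1 (t2 + 1) with hU
  set R := sR s u t1 (t2 + 1) with hR
  have hf : Continuous fun x => U t2 x - U t1 x := (S.Uct t2).sub (S.Uct t1)
  have e : (∫ x in (0:ℝ)..r, (r - x) * (u t2 x - u t1 x))
      = ∫ x in (0:ℝ)..r, (r - x) * (U t2 x - U t1 x) := by
    apply intervalIntegral.integral_congr
    intro x hx
    rw [uIcc_of_le hr0] at hx
    simp only
    rw [hU, sU_eq m1 ⟨hx.1, hx.2.trans hr⟩, sU_eq m2 ⟨hx.1, hx.2.trans (hr.trans l12)⟩]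
  have hFd : ∀ y, HasDerivAt (fun y => ∫ x in (0:ℝ)..y, (U t2 x - U t1 x)) (U t2 y - U t1 y) y :=
    fun y => Strip.hasDeriv_int hf 0 y
  have hFc : Continuous (fun y => ∫ x in (0:ℝ)..y, (U t2 x - U t1 x)) :=
    continuous_iff_continuousAt.2 fun y => (hFd y).continuousAt
  have e2 : (∫ x in (0:ℝ)..r, (r - x) * (U t2 x - U t1 x))
      = ∫ y in (0:ℝ)..r, ∫ x in (0:ℝ)..y, (U t2 x - U t1 x) := by
    have c1 : Continuous fun y => (r - y) * (U t2 y - U t1 y) := by fun_prop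
    rw [← sub_eq_zero, ← intervalIntegral.integral_sub (c1.intervalIntegrable _ _)
      (hFc.intervalIntegrable _ _)]
    have hd : ∀ y ∈ uIcc 0 r, HasDerivAt (fun y => (r - y) * ∫ x in (0:ℝ)..y, (U t2 x - U t1 x))
        ((r - y) * (U t2 y - U t1 y) - ∫ x in (0:ℝ)..y, (U t2 x - U t1 x)) y := by
      intro y _
      have h9 : HasDerivAt (fun y : ℝ => r - y) (-1) y := (hasDerivAt_id y).const_sub r
      refine (h9.mul (hFd y)).congr_deriv ?_
      ring
    rw [intervalIntegral.integral_eq_sub_of_hasDerivAt hd ((c1.sub hFc).intervalIntegrable _ _)]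
    simp
  have e3 : (∫ y in (0:ℝ)..r, ∫ x in (0:ℝ)..y, (U t2 x - U t1 x))
      = ∫ y in (0:ℝ)..r, ∫ τ in t1..t2, (R τ y - R τ 0) := by
    apply intervalIntegral.integral_congr
    intro y hy
    rw [uIcc_of_le hr0] at hy
    exact S.rect t1 m1 t2 m2 h12 y ⟨hy.1, by rw [hσ, sσ_eq m1]; exact hy.2.trans hr⟩
  have hRc := S.Rc
  have e4 : (∫ y in (0:ℝ)..r, ∫ τ in t1..t2, (R τ y - R τ 0))
      = ∫ τ in t1..t2, ∫ y in (0:ℝ)..r, (R τ y - R τ 0) := by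
    have cc : Continuous (Function.uncurry fun y τ => R τ y - R τ 0) := by
      exact (hRc.comp (by fun_prop : Continuous fun q : ℝ × ℝ => (q.2, q.1))).sub
        (hRc.comp (by fun_prop : Continuous fun q : ℝ × ℝ => (q.2, (0:ℝ))))
    have hio : IntegrableOn (Function.uncurry fun y τ => R τ y - R τ 0) (Ioc 0 r ×ˢ Ioc t1 t2)
        (volume.prod volume) :=
      (cc.continuousOn.integrableOn_compact
        (isCompact_Icc.prod isCompact_Icc : IsCompact (Icc 0 r ×ˢ Icc t1 t2))).mono_set
        (prod_mono Ioc_subset_Icc_self Ioc_subset_Icc_self)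
    simp only [intervalIntegral.integral_of_le hr0, intervalIntegral.integral_of_le h12]
    apply integral_integral_swap
    rw [Measure.prod_restrict]
    exact hio
  rw [e, e2, e3, e4]
  apply intervalIntegral.integral_congr
  intro τ hτ
  rw [uIcc_of_le h12] at hτ
  have mτ : τ ∈ Icc t1 (t2 + 1) := ⟨hτ.1, by linarith [hτ.2]⟩
  have hsτ : s t1 ≤ s τ := H.s_mono h1.le hτ.1
  have z : (0:ℝ) ∈ Icc 0 (s τ) := ⟨le_rfl, (H.s_pos (by linarith [hτ.1])).le⟩
  simp only
  rw [intervalIntegral.integral_sub ((S.Rct τ).intervalIntegrable _ _) (by simp),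
    S.U_int mτ ⟨hr0, by rw [hσ, sσ_eq mτ]; exact hr.trans hsτ⟩, S.bc τ mτ]
  rw [hU, sU_eq mτ z, sU_eq mτ ⟨hr0, hr.trans hsτ⟩]
  simp
end IsGlobalSol

namespace IsGlobalSol
variable {p s₀ : ℝ} {φ s : ℝ → ℝ} {u : ℝ → ℝ → ℝ}

lemma ur_cont (H : IsGlobalSol p s₀ φ s u) {a b r : ℝ} (ha : 0 ≤ a) (hr0 : 0 ≤ r) (hr : r ≤ s₀) :
    ContinuousOn (fun t => u t r) (Icc a b) := by
  rcases lt_or_ge b a with h | h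
  · rw [Icc_eq_empty (not_le.2 h)]; exact continuousOn_empty _
  · refine ((H (b + 1) (by linarith)).u_cont).comp (f := fun t : ℝ => (t, r)) (by fun_prop) ?_
    intro t ht
    exact ⟨⟨ha.trans ht.1, by linarith [ht.2]⟩, hr0, hr.trans (H.s_ge (ha.trans ht.1))⟩

lemma drop (H : IsGlobalSol p s₀ φ s u) (hp : 1 < p) {t1 t2 N : ℝ} (h1 : 0 < t1) (h12 : t1 ≤ t2)
    (hN : 0 < N) (hs : 2 * N ^ (1 - p) ≤ s₀) (hu : ∀ t ∈ Icc t1 t2, N ≤ u t 0) :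
    energy p s u t2 ≤ energy p s u t1 - 3 / 8 * N ^ (3 * p - 1) * (t2 - t1) := by
  set r := 2 * N ^ (1 - p) with hr
  have hr0 : 0 < r := by positivity
  have hrs : r ≤ s t1 := hs.trans (H.s_ge h1.le)
  have hm := H.moment hp h1 h12 hr0.le hrs
  have hge : N * (t2 - t1) ≤ ∫ t in t1..t2, (u t r - u t 0 + r * u t 0 ^ p) := by
    have hc : ContinuousOn (fun t => u t r - u t 0 + r * u t 0 ^ p) (Icc t1 t2) := by
      have c0 := H.u0_cont (a := t1) (b := t2) h1.le
      refine ((H.ur_cont h1.le hr0.le hs).sub c0).add (continuousOn_const.mul ?_)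
      exact c0.rpow_const fun t ht => Or.inr (by linarith)
    have := intervalIntegral.integral_mono_on (f := fun _ => N)
      (g := fun t => u t r - u t 0 + r * u t 0 ^ p) (μ := volume) h12 intervalIntegrable_const
      (hc.intervalIntegrable_of_Icc h12) (by
        intro t ht
        have hv := hu t ht
        have ht0 : 0 ≤ t := h1.le.trans ht.1
        have hur : 0 ≤ u t r := H.u_nn ht0 ⟨hr0.le, hs.trans (H.s_ge ht0)⟩
        have hv0 : 0 < u t 0 := hN.trans_le hv
        have e1 : u t 0 ^ p = u t 0 ^ (p - 1) * u t 0 := by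
          rw [← Real.rpow_add_one hv0.ne']; ring_nf
        have e2 : N ^ (p - 1) ≤ u t 0 ^ (p - 1) := Real.rpow_le_rpow hN.le hv (by linarith)
        have e3 : N ^ (1 - p) * N ^ (p - 1) = 1 := by
          rw [← Real.rpow_add hN, show 1 - p + (p - 1) = 0 by ring, Real.rpow_zero]
        have e4 : 1 ≤ N ^ (1 - p) * u t 0 ^ (p - 1) := by
          exact e3.symm.le.trans (mul_le_mul_of_nonneg_left e2 (by positivity))
        have e5 : 2 * u t 0 ≤ r * u t 0 ^ p := by
          rw [e1, hr]
          calc 2 * u t 0 = 2 * 1 * u t 0 := by ring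
            _ ≤ 2 * (N ^ (1 - p) * u t 0 ^ (p - 1)) * u t 0 := by gcongr
            _ = _ := by ring
        linarith)
    simpa [mul_comm] using this
  set lam := 3 * N / r ^ 3 with hlam
  have hlam0 : 0 < lam := by positivity
  have key := H.energy_le hp h1 h12 hr0.le hrs (θ := fun x => lam * (r - x)) (by fun_prop)
  have e1 : (∫ x in (0:ℝ)..r, lam * (r - x) * (u t2 x - u t1 x))
      = lam * ∫ x in (0:ℝ)..r, (r - x) * (u t2 x - u t1 x) := by
    rw [← intervalIntegral.integral_const_mul]
    simp only [mul_assoc]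
  have e2 : (∫ x in (0:ℝ)..r, (lam * (r - x)) ^ 2) = lam ^ 2 * (r ^ 3 / 3) := by
    simp only [mul_pow, intervalIntegral.integral_const_mul]
    congr 1
    have := intervalIntegral.integral_comp_sub_left (fun x : ℝ => x ^ 2) (a := 0) (b := r) r
    rw [this]
    simp
    norm_num
  rw [e1, e2, hm] at key
  have hr3 : r ^ 3 = 8 * N ^ (3 - 3 * p) := by
    rw [hr, mul_pow, ← Real.rpow_natCast (N ^ (1 - p)), ← Real.rpow_mul hN.le]
    norm_num
    ring_nf
  have hf : 3 * N ^ 2 / r ^ 3 = 3 / 8 * N ^ (3 * p - 1) := by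
    rw [hr3, div_eq_iff (by positivity)]
    have : N ^ (3 * p - 1) * N ^ (3 - 3 * p) = N ^ 2 := by
      rw [← Real.rpow_add hN, ← Real.rpow_natCast]; congr 1; push_cast; ring
    rw [← this]; ring
  rw [← hf]
  have h5 : lam * (N * (t2 - t1)) ≤ lam * ∫ t in t1..t2, (u t r - u t 0 + r * u t 0 ^ p) := by gcongr
  have h6 : -(2 * (lam * (N * (t2 - t1)))) + (t2 - t1) * (lam ^ 2 * (r ^ 3 / 3))
      = -(3 * N ^ 2 / r ^ 3 * (t2 - t1)) := by
    rw [hlam]; field_simp; ring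
  linarith

lemma energy_u0 (H : IsGlobalSol p s₀ φ s u) (hp : 1 < p) {t : ℝ} (ht : 0 ≤ t) :
    -energy p s u t ≤ u t 0 ^ (p + 1) := by
  have h1 : 0 ≤ ∫ x in (0:ℝ)..(s t), (deriv (u t) x) ^ 2 :=
    intervalIntegral.integral_nonneg (H.s_pos ht).le fun x _ => sq_nonneg _
  have h2 : 0 ≤ u t 0 ^ (p + 1) := Real.rpow_nonneg (H.u0_nn ht) _
  have h3 : u t 0 ^ (p + 1) / (p + 1) ≤ u t 0 ^ (p + 1) := div_le_self h2 (by linarith)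
  unfold energy
  linarith

lemma energy_lower (H : IsGlobalSol p s₀ φ s u) (hp : 1 < p) {N₀ : ℝ} (hN : 0 < N₀)
    (hs : 2 * N₀ ^ (1 - p) ≤ s₀) {t : ℝ} (ht : 0 < t) : -N₀ ^ (p + 1) < energy p s u t := by
  by_contra! hneg
  set Y := N₀ ^ (p + 1) with hY
  have hY0 : 0 < Y := by positivity
  set q := (3 * p - 1) / (p + 1) with hq
  have hq1 : 1 < q := by rw [hq, lt_div_iff₀ (by linarith)]; linarith
  have step : ∀ Z t' δ, Y ≤ Z → 0 < t' → Z ≤ -energy p s u t' → 0 ≤ δ →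
      Z + 3 / 8 * Z ^ q * δ ≤ -energy p s u (t' + δ) := by
    intro Z t' δ hZ ht' hZe hδ
    have hZ0 : 0 < Z := hY0.trans_le hZ
    set N := Z ^ (1 / (p + 1)) with hNd
    have hN0 : N₀ ≤ N := by
      have : Y ^ (1 / (p + 1)) = N₀ := by
        rw [hY, ← Real.rpow_mul hN.le, mul_one_div_cancel (by linarith), Real.rpow_one]
      rw [← this]
      exact Real.rpow_le_rpow hY0.le hZ (by positivity)
    have hNpos : 0 < N := hN.trans_le hN0
    have hNp : N ^ (p + 1) = Z := by
      rw [hNd, ← Real.rpow_mul hZ0.le, one_div_mul_cancel (by linarith), Real.rpow_one]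
    have hd := H.drop hp ht' (t2 := t' + δ) (by linarith) hNpos (by
      have : N ^ (1 - p) ≤ N₀ ^ (1 - p) := Real.rpow_le_rpow_of_nonpos hN hN0 (by linarith)
      linarith) (by
      intro τ hτ
      have h0 : 0 < τ := ht'.trans_le hτ.1
      have h1 := H.energy_anti hp ht' hτ.1
      have h2 := H.energy_u0 hp h0.le
      have h3 : N ^ (p + 1) ≤ u τ 0 ^ (p + 1) := by rw [hNp]; linarith
      exact (Real.rpow_le_rpow_iff hNpos.le (H.u0_nn h0.le) (by linarith)).1 h3)
    have hNq : N ^ (3 * p - 1) = Z ^ q := by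
      rw [hNd, ← Real.rpow_mul hZ0.le, hq]; congr 1; ring
    rw [hNq, add_sub_cancel_left] at hd
    linarith
  set ρ := (2:ℝ) ^ (1 - q) with hρ
  have hρ0 : 0 < ρ := by positivity
  have hρ1 : ρ < 1 := Real.rpow_lt_one_of_one_lt_of_neg (by norm_num) (by linarith)
  set c := 8 / 3 * Y ^ (1 - q) with hc
  have hc0 : 0 < c := by positivity
  have ind : ∀ k : ℕ, 2 ^ k * Y ≤ -energy p s u (t + c * ∑ i ∈ Finset.range k, ρ ^ i) := by
    intro k
    induction k with
    | zero => simp; linarith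
    | succ k ih =>
      have hZ : Y ≤ 2 ^ k * Y := le_mul_of_one_le_left hY0.le (one_le_pow₀ (by norm_num))
      have hZ0 : 0 < 2 ^ k * Y := by positivity
      have := step (2 ^ k * Y) (t + c * ∑ i ∈ Finset.range k, ρ ^ i) (c * ρ ^ k) hZ (by positivity) ih
        (by positivity)
      have e : 3 / 8 * (2 ^ k * Y) ^ q * (c * ρ ^ k) = 2 ^ k * Y := by
        have e1 : c * ρ ^ k = 8 / 3 * (2 ^ k * Y) ^ (1 - q) := by
          rw [Real.mul_rpow (show (0:ℝ) ≤ 2 ^ k by positivity) hY0.le, hc, hρ,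
            Real.rpow_pow_comm (show (0:ℝ) ≤ 2 by norm_num)]
          ring
        rw [e1]
        have e2 : (2 ^ k * Y) ^ q * (2 ^ k * Y) ^ (1 - q) = 2 ^ k * Y := by
          rw [← Real.rpow_add hZ0, add_sub_cancel, Real.rpow_one]
        linear_combination e2
      rw [e] at this
      rw [Finset.sum_range_succ, mul_add, ← add_assoc, pow_succ]
      linarith
  have hsum : ∀ k : ℕ, ∑ i ∈ Finset.range k, ρ ^ i ≤ (1 - ρ)⁻¹ := by
    intro k
    rw [← tsum_geometric_of_lt_one hρ0.le hρ1]
    exact (summable_geometric_of_lt_one hρ0.le hρ1).sum_le_tsum _ fun i _ => by positivity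
  have hall : ∀ k : ℕ, 2 ^ k * Y ≤ -energy p s u (t + c * (1 - ρ)⁻¹) := by
    intro k
    have h1 := H.energy_anti hp (t1 := t + c * ∑ i ∈ Finset.range k, ρ ^ i)
      (t2 := t + c * (1 - ρ)⁻¹) (by positivity) (by have := hsum k; gcongr)
    linarith [ind k]
  obtain ⟨k, hk⟩ := pow_unbounded_of_one_lt (-energy p s u (t + c * (1 - ρ)⁻¹) / Y) (one_lt_two (α := ℝ))
  rw [div_lt_iff₀ hY0] at hk
  linarith [hall k]

end IsGlobalSol

def Kc (p M : ℝ) : ℝ := (2 * M) ^ p + 1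
def tauc (p M : ℝ) : ℝ := M ^ 2 / (16 * Kc p M ^ 2)
def Lc (p M : ℝ) : ℝ := (M + 1) * (1 + 2 * M) + tauc p M * (2 * M) ^ p
def C1c (p M : ℝ) : ℝ := (2 * M) ^ (p + 1) + 4 * M ^ 2 * Lc p M / tauc p M + 1

lemma Kc_pos {p M : ℝ} (hM : 0 < M) : 0 < Kc p M := by unfold Kc; positivity
lemma tauc_pos {p M : ℝ} (hM : 0 < M) : 0 < tauc p M := by
  have := Kc_pos (p := p) hM
  unfold tauc; positivity
lemma Lc_pos {p M : ℝ} (hM : 0 < M) : 0 < Lc p M := by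
  have := tauc_pos (p := p) hM
  unfold Lc; positivity

namespace IsGlobalSol
variable {p s₀ M : ℝ} {φ s : ℝ → ℝ} {u : ℝ → ℝ → ℝ}

lemma short (H : IsGlobalSol p s₀ φ s u) (hp : 1 < p) (hM : 0 < M)
    (hφ : ∀ x ∈ Icc 0 s₀, φ x ≤ M) : ∀ t ∈ Icc 0 (tauc p M), u t 0 ≤ 2 * M := by
  by_contra! hcon
  obtain ⟨t', ht', hu'⟩ := hcon
  have hK := Kc_pos (p := p) hM
  set K := Kc p M with hKd
  have h0φ : u 0 0 ≤ M := by
    have h00 : (0:ℝ) ∈ Icc 0 s₀ := ⟨le_rfl, by rw [← (H 1 one_pos).init_s]; exact (H.s_pos le_rfl).le⟩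
    rw [(H 1 one_pos).init 0 h00]
    exact hφ 0 h00
  have hc := H.u0_cont (a := 0) (b := tauc p M) le_rfl
  have hcl : IsCompact (Icc 0 (tauc p M) ∩ (fun t => u t 0) ⁻¹' Ici (2 * M)) :=
    isCompact_Icc.of_isClosed_subset (hc.preimage_isClosed_of_isClosed isClosed_Icc isClosed_Ici)
      inter_subset_left
  obtain ⟨T, ⟨hT, hTu⟩, hleast⟩ := hcl.exists_isLeast ⟨t', ht', hu'.le⟩
  simp only [mem_preimage, mem_Ici] at hTu
  have hT0 : 0 < T := by
    rcases hT.1.eq_or_lt with h | h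
    · subst h; linarith
    · exact h
  have hbelow : ∀ t ∈ Ico 0 T, u t 0 < 2 * M := by
    intro t ht
    by_contra! h
    exact absurd (hleast ⟨⟨ht.1, ht.2.le.trans hT.2⟩, h⟩) (not_le.2 ht.2)
  have hle : ∀ t ∈ Icc 0 T, u t 0 ≤ 2 * M := by
    have := closure_Ico hT0.ne
    intro t ht
    rcases ht.2.eq_or_lt with h | h
    · subst h
      have hcw : ContinuousOn (fun t => u t 0) (closure (Ico 0 t)) := by
        rw [closure_Ico hT0.ne]; exact H.u0_cont le_rfl
      exact le_on_closure (fun x hx => (hbelow x hx).le) hcw continuousOn_const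
        (by rw [closure_Ico hT0.ne]; exact ht)
    · exact (hbelow t ⟨ht.1, h⟩).le
  have key := (H T hT0).max_prin (A := M + M / 4) (b := -K) (c := K ^ 2 / M) (d := 4 * K ^ 2 / M)
    (by
      have : 0 < K ^ 2 / M := by positivity
      have e : 4 * K ^ 2 / M = 4 * (K ^ 2 / M) := by ring
      rw [e]; linarith)
    (by
      intro x hx
      have e : M + M / 4 + -K * x + K ^ 2 / M * x ^ 2 = M + (K * x - M / 2) ^ 2 / M := by
        field_simp; ring
      rw [e]
      have : 0 ≤ (K * x - M / 2) ^ 2 / M := by positivity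
      linarith [hφ x hx])
    (by
      intro t ht
      have e : M + M / 4 + -K * s t + K ^ 2 / M * s t ^ 2 + 4 * K ^ 2 / M * t
        = M + (K * s t - M / 2) ^ 2 / M + 4 * K ^ 2 / M * t := by
        field_simp; ring
      rw [e]
      have := ht.1
      positivity)
    (by
      intro t ht
      left
      have h1 := (H T hT0).bc_zero t ht
      have h2 : u t 0 ^ p ≤ (2 * M) ^ p :=
        Real.rpow_le_rpow (H.u0_nn ht.1.le) (hle t ⟨ht.1.le, ht.2⟩) (by linarith)
      have h3 : K = (2 * M) ^ p + 1 := rfl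
      linarith) T ⟨hT0.le, le_rfl⟩ 0 ⟨le_rfl, (H.s_pos hT0.le).le⟩
  have h4 : 4 * K ^ 2 / M * T ≤ M / 4 := by
    have h5 : 4 * K ^ 2 / M * T ≤ 4 * K ^ 2 / M * tauc p M := by
      have := hT.2; gcongr
    have h6 : 4 * K ^ 2 / M * tauc p M = M / 4 := by
      unfold tauc; rw [← hKd]; field_simp; norm_num
    linarith
  norm_num at key
  linarith

lemma short_all (H : IsGlobalSol p s₀ φ s u) (hp : 1 < p) (hM : 0 < M)
    (hφ : ∀ x ∈ Icc 0 s₀, φ x ≤ M) : ∀ t ∈ Icc 0 (tauc p M), ∀ x ∈ Icc 0 (s t), u t x ≤ 2 * M :=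
  (H _ (tauc_pos hM)).bound_of_bdry (by linarith) (fun x hx => by linarith [hφ x hx])
    fun t ht => H.short hp hM hφ t ⟨ht.1.le, ht.2⟩

lemma mass (H : IsGlobalSol p s₀ φ s u) (hp : 1 < p) (hM : 0 < M) (hs : s₀ ≤ M)
    (hφ : ∀ x ∈ Icc 0 s₀, φ x ≤ M) : s (tauc p M) ≤ Lc p M := by
  have hτ := tauc_pos (p := p) hM
  set τ := tauc p M with hτd
  obtain ⟨a, ha0, haτ, hsa⟩ : ∃ a, 0 < a ∧ a < τ ∧ s a ≤ M + 1 := by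
    have hcw : ContinuousWithinAt s (Icc 0 τ) 0 := (H τ hτ).s_cont 0 ⟨le_rfl, hτ.le⟩
    have hev : ∀ᶠ t in 𝓝[Icc 0 τ] 0, s t < M + 1 :=
      hcw.eventually (gt_mem_nhds (by rw [(H τ hτ).init_s]; linarith))
    have hle : 𝓝[>] (0:ℝ) ≤ 𝓝[Icc 0 τ] 0 := by
      rw [← nhdsWithin_Ioo_eq_nhdsGT hτ]
      exact nhdsWithin_mono _ Ioo_subset_Icc_self
    have hev' : ∀ᶠ t in 𝓝[>] (0:ℝ), s t < M + 1 := hle hev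
    obtain ⟨a, h1, h2⟩ := (hev'.and (Ioo_mem_nhdsGT hτ)).exists
    exact ⟨a, h2.1, h2.2, le_of_lt h1⟩
  have S := (H τ hτ).strip hp ha0 haτ
  have m1 : a ∈ Icc a τ := ⟨le_rfl, haτ.le⟩
  have m2 : τ ∈ Icc a τ := ⟨haτ.le, le_rfl⟩
  have hsτ := H.s_pos hτ.le
  have hs1 : s a ≤ s τ := H.s_mono ha0.le haτ.le
  have key := S.int_Gx m1 m2 haτ.le (x := s τ + 1) (by linarith)
  have e1 : ∫ t in a..τ, Gx (sσ s a τ) (sR s u a τ) t (s τ + 1) = 0 := by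
    rw [intervalIntegral.integral_of_le haτ.le]
    apply setIntegral_eq_zero_of_forall_eq_zero
    intro t ht
    have : s t ≤ s τ := H.s_mono (ha0.le.trans ht.1.le) ht.2
    simp only [Gx, sσ_eq (Ioc_subset_Icc_self ht)]
    rw [if_neg (by linarith)]
  rw [e1, Pf, sσ_eq m1, sσ_eq m2, min_eq_right (by linarith), min_eq_right (by linarith),
    intervalIntegral.integral_sub ((S.Uct _).intervalIntegrable _ _)
      ((S.Uct _).intervalIntegrable _ _)] at key
  have e2 : 0 ≤ ∫ z in (0:ℝ)..(s τ + 1), sU s u a τ τ z :=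
    intervalIntegral.integral_nonneg (by linarith) fun z _ => S.Un _ _
  have hsa0 := (H.s_pos ha0.le).le
  have e3 : ∫ z in (0:ℝ)..(s τ + 1), sU s u a τ a z ≤ 2 * M * s a := by
    rw [← intervalIntegral.integral_add_adjacent_intervals
      ((S.Uct a).intervalIntegrable 0 (s a)) ((S.Uct a).intervalIntegrable (s a) (s τ + 1))]
    have f1 : ∫ z in (s a)..(s τ + 1), sU s u a τ a z = 0 := by
      rw [intervalIntegral.integral_of_le (by linarith)]
      apply setIntegral_eq_zero_of_forall_eq_zero
      intro x hx
      exact S.Uz a x (by rw [sσ_eq m1]; exact hx.1.le)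
    have f2 := intervalIntegral.integral_mono_on (μ := volume) (f := sU s u a τ a) (g := fun _ => 2 * M)
      hsa0 ((S.Uct a).intervalIntegrable _ _) intervalIntegrable_const (by
        intro x hx
        rw [sU_eq m1 hx]
        exact H.short_all hp hM hφ a ⟨ha0.le, haτ.le⟩ x hx)
    rw [f1]
    simp at f2
    linarith
  have e4 : -((2 * M) ^ p * τ) ≤ ∫ t in a..τ, sR s u a τ t 0 := by
    have f2 := intervalIntegral.integral_mono_on (μ := volume) (g := fun t => sR s u a τ t 0)
      (f := fun _ => -(2 * M) ^ p)
      haτ.le intervalIntegrable_const ((S.Rcx 0).intervalIntegrable _ _) (by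
        intro t ht
        have h0 : 0 ≤ t := ha0.le.trans ht.1
        rw [S.bc t ht, sU_eq ht ⟨le_rfl, (H.s_pos h0).le⟩]
        have := Real.rpow_le_rpow (H.u0_nn h0) (H.short hp hM hφ t ⟨h0, ht.2⟩) (z := p) (by linarith)
        linarith)
    simp at f2
    have : 0 < (2 * M) ^ p := by positivity
    nlinarith
  have e5 : s a * (1 + 2 * M) ≤ (M + 1) * (1 + 2 * M) := by gcongr
  unfold Lc
  rw [← hτd]
  linarith

lemma good_time (H : IsGlobalSol p s₀ φ s u) (hp : 1 < p) (hM : 0 < M) (hs : s₀ ≤ M)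
    (hφ : ∀ x ∈ Icc 0 s₀, φ x ≤ M) : energy p s u (tauc p M) ≤ C1c p M := by
  by_contra! hcon
  have hτ := tauc_pos (p := p) hM
  have hmass := H.mass hp hM hs hφ
  have hLc := Lc_pos (p := p) hM
  have hC : C1c p M = (2 * M) ^ (p + 1) + 4 * M ^ 2 * Lc p M / tauc p M + 1 := rfl
  set τ := tauc p M with hτd
  set C1 := C1c p M
  set Lc := Lc p M
  have ha : 0 < τ / 2 := by linarith
  have hab : τ / 2 < τ := by linarith
  have S := (H τ hτ).strip hp ha hab
  have m2 : τ ∈ Icc (τ / 2) τ := ⟨hab.le, le_rfl⟩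
  have m1 : τ / 2 ∈ Icc (τ / 2) τ := ⟨le_rfl, hab.le⟩
  have hL : sσ s (τ / 2) τ τ ≤ s τ := by rw [sσ_eq m2]
  set U := sU s u (τ / 2) τ with hU
  set R := sR s u (τ / 2) τ with hR
  set σ := sσ s (τ / 2) τ with hσ
  have hsτ := (H.s_pos hτ.le).le
  have hEn : ∀ t ∈ Ico (τ / 2) τ, C1 < energy p s u t := fun t ht =>
    hcon.trans_le (H.energy_anti hp (ha.trans_le ht.1) ht.2.le)
  set κ := 2 * (2 * M) ^ (p + 1) - 4 * C1 with hκ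
  have hUc := S.Uc
  have hcg : Continuous fun y => ∫ x in (0:ℝ)..(s τ), U y x ^ 2 := by
    apply intervalIntegral.continuous_parametric_intervalIntegral_of_continuous'
    exact S.Uc.pow 2
  have fence := image_le_of_liminf_slope_right_lt_deriv_boundary
    (f := fun y => ∫ x in (0:ℝ)..(s τ), U y x ^ 2)
    (f' := fun t => -2 * R t 0 * U t 0 - 2 * (∫ x in (0:ℝ)..(s τ), Gx σ R t x ^ 2))
    (a := τ / 2) (b := τ) hcg.continuousOn
    (fun t ht r hr => (S.L2_dini ht hL hr).frequently)
    (B := fun t => (∫ x in (0:ℝ)..(s τ), U (τ / 2) x ^ 2) + κ * (t - τ / 2)) (B' := fun _ => κ)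
    (by simp)
    (fun x => by
      have h9 : HasDerivAt (fun t : ℝ => t - τ / 2) 1 x := (hasDerivAt_id x).sub_const _
      simpa using (h9.const_mul κ).const_add (∫ x in (0:ℝ)..(s τ), U (τ / 2) x ^ 2))
    (by
      intro t ht _
      have htI : t ∈ Icc (τ / 2) τ := ⟨ht.1, ht.2.le⟩
      have ht0 : 0 ≤ t := ha.le.trans ht.1
      have h1 := hEn t ht
      have hg := H.Gx_int ha hab htI (L := s τ) (H.s_mono ht0 ht.2.le)
      have hz : (0:ℝ) ∈ Icc 0 (s t) := ⟨le_rfl, (H.s_pos ht0).le⟩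
      have hb := S.bc t htI
      have hUe : U t 0 = u t 0 := sU_eq htI hz
      rw [hσ, hR, hg, ← hR, hb, hUe]
      have hu0 := H.u0_nn ht0
      have h2 : u t 0 ≤ 2 * M := H.short hp hM hφ t ⟨ht0, ht.2.le⟩
      have h3 : u t 0 ^ (p + 1) ≤ (2 * M) ^ (p + 1) := Real.rpow_le_rpow hu0 h2 (by linarith)
      have h4 : u t 0 ^ p * u t 0 = u t 0 ^ (p + 1) := by
        rw [Real.rpow_add_one' hu0 (by linarith)]
      have h5 : 0 ≤ u t 0 ^ (p + 1) / (p + 1) := div_nonneg (Real.rpow_nonneg hu0 _) (by linarith)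
      unfold energy at h1
      have h6 : -2 * -u t 0 ^ p * u t 0 = 2 * u t 0 ^ (p + 1) := by rw [← h4]; ring
      rw [h6, hκ]
      linarith) m2
  have g0 : 0 ≤ ∫ x in (0:ℝ)..(s τ), U τ x ^ 2 :=
    intervalIntegral.integral_nonneg hsτ fun x _ => sq_nonneg _
  have g1 : ∫ x in (0:ℝ)..(s τ), U (τ / 2) x ^ 2 ≤ 4 * M ^ 2 * Lc := by
    have hc2 : Continuous fun x => U (τ / 2) x ^ 2 := (S.Uct _).pow 2
    have f2 := intervalIntegral.integral_mono_on (μ := volume) (f := fun x => U (τ / 2) x ^ 2)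
      (g := fun _ => (2 * M) ^ 2)
      hsτ (hc2.intervalIntegrable _ _) intervalIntegrable_const (by
        intro x hx
        have h1 : U (τ / 2) x ≤ 2 * M := by
          rcases le_total x (s (τ / 2)) with h | h
          · rw [hU, sU_eq m1 ⟨hx.1, h⟩]
            exact H.short_all hp hM hφ _ ⟨ha.le, hab.le⟩ x ⟨hx.1, h⟩
          · rw [S.Uz _ x (by rw [hσ, sσ_eq m1]; exact h)]; linarith
        exact pow_le_pow_left₀ (S.Un _ _) h1 2)
    simp only [intervalIntegral.integral_const, smul_eq_mul, sub_zero] at f2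
    have : s τ * (2 * M) ^ 2 ≤ Lc * (2 * M) ^ 2 := by gcongr
    linarith
  have g2 : κ * (τ - τ / 2) = -(2 * M) ^ (p + 1) * τ - 8 * M ^ 2 * Lc - 2 * τ := by
    rw [hκ, hC]; field_simp; ring
  have g3 : 0 < (2 * M) ^ (p + 1) * τ := by positivity
  have g4 : 0 < M ^ 2 * Lc := by positivity
  linarith

end IsGlobalSol

lemma crossing {f : ℝ → ℝ} {α β c d : ℝ} (hαβ : α ≤ β) (hf : ContinuousOn f (Icc α β))
    (h1 : f α ≤ c) (hcd : c < d) (h2 : d ≤ f β) :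
    ∃ t1 t2, α ≤ t1 ∧ t1 ≤ t2 ∧ t2 ≤ β ∧ f t1 = c ∧ f t2 = d ∧ ∀ t ∈ Icc t1 t2, c ≤ f t ∧ f t ≤ d := by
  have hcl : IsCompact (Icc α β ∩ f ⁻¹' {d}) :=
    isCompact_Icc.of_isClosed_subset (hf.preimage_isClosed_of_isClosed isClosed_Icc isClosed_singleton)
      inter_subset_left
  obtain ⟨z, hz, hzd⟩ := intermediate_value_Icc hαβ hf ⟨h1.trans hcd.le, h2⟩
  obtain ⟨t2, ⟨ht2, hft2⟩, hleast⟩ := hcl.exists_isLeast ⟨z, hz, hzd⟩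
  simp only [mem_preimage, mem_singleton_iff] at hft2
  have hf2 : ContinuousOn f (Icc α t2) := hf.mono (Icc_subset_Icc_right ht2.2)
  have hcl2 : IsCompact (Icc α t2 ∩ f ⁻¹' {c}) :=
    isCompact_Icc.of_isClosed_subset (hf2.preimage_isClosed_of_isClosed isClosed_Icc isClosed_singleton)
      inter_subset_left
  obtain ⟨z, hz, hzd⟩ := intermediate_value_Icc ht2.1 hf2 ⟨h1, hft2 ▸ hcd.le⟩
  obtain ⟨t1, ⟨ht1, hft1⟩, hgr⟩ := hcl2.exists_isGreatest ⟨z, hz, hzd⟩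
  simp only [mem_preimage, mem_singleton_iff] at hft1
  refine ⟨t1, t2, ht1.1, ht1.2, ht2.2, hft1, hft2, fun t ht => ⟨?_, ?_⟩⟩
  · by_contra! h
    obtain ⟨w, hw, hwc⟩ := intermediate_value_Icc ht.2
      (hf2.mono (Icc_subset_Icc_left (ht1.1.trans ht.1))) ⟨h.le, hft2 ▸ hcd.le⟩
    have hw1 : w ≤ t1 := hgr ⟨⟨(ht1.1.trans ht.1).trans hw.1, hw.2⟩, hwc⟩
    have : t = t1 := le_antisymm (hw.1.trans hw1) ht.1
    rw [this, hft1] at h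
    exact lt_irrefl _ h
  · by_contra! h
    have hαt : α ≤ t := ht1.1.trans ht.1
    obtain ⟨w, hw, hwc⟩ := intermediate_value_Icc hαt
      (hf2.mono (Icc_subset_Icc_right ht.2)) ⟨h1.trans hcd.le, h.le⟩
    have hw1 : t2 ≤ w := hleast ⟨⟨hw.1, hw.2.trans (ht.2.trans ht2.2)⟩, hwc⟩
    have : t = t2 := le_antisymm ht.2 (hw1.trans hw.2)
    rw [this, hft2] at h
    exact lt_irrefl _ h

def N0c (p M : ℝ) : ℝ := (2 * M) ^ (1 / (p - 1))
def Yc (p M : ℝ) : ℝ := N0c p M ^ (p + 1)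
def C3c (p M : ℝ) : ℝ := 8 / 3 * 4 ^ (3 * p - 1) * (C1c p M + Yc p M)
def N1c (p M : ℝ) : ℝ :=
  1 + 8 * M + 2 * C1c p M + 4 * N0c p M + 100 * (C1c p M + Yc p M + C3c p M)

namespace IsGlobalSol
variable {p s₀ M : ℝ} {φ s : ℝ → ℝ} {u : ℝ → ℝ → ℝ}

lemma osc_bound (H : IsGlobalSol p s₀ φ s u) {t x e : ℝ} (ht : 0 < t) (hx : x ∈ Icc 0 (s t))
    (he : 0 < e) :
    |u t x - u t 0| ≤ (e * (∫ z in (0:ℝ)..(s t), (deriv (u t) z) ^ 2) + x / e) / 2 := by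
  have HT := H (t + 1) (by linarith)
  have m : t ∈ Ioc 0 (t + 1) := ⟨ht, by linarith⟩
  have cR := HT.ux_slice m
  have cRx : ContinuousOn (deriv (u t)) (Icc 0 x) := cR.mono (Icc_subset_Icc_right hx.2)
  have c2 : ContinuousOn (fun z => (deriv (u t) z) ^ 2) (Icc 0 (s t)) := cR.pow 2
  have i2 := c2.intervalIntegrable_of_Icc (μ := volume) (H.s_pos ht.le).le
  have i2x : IntervalIntegrable (fun z => (deriv (u t) z) ^ 2) volume 0 x :=
    (c2.mono (Icc_subset_Icc_right hx.2)).intervalIntegrable_of_Icc hx.1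
  have i2y : IntervalIntegrable (fun z => (deriv (u t) z) ^ 2) volume x (s t) :=
    (c2.mono (Icc_subset_Icc_left hx.1)).intervalIntegrable_of_Icc hx.2
  have ftc : ∫ z in (0:ℝ)..x, deriv (u t) z = u t x - u t 0 := by
    apply intervalIntegral.integral_eq_sub_of_hasDerivAt_of_le hx.1
      ((HT.u_slice ⟨m.1.le, m.2⟩).mono (Icc_subset_Icc_right hx.2))
    · intro z hz
      exact (HT.ux_diff t m z ⟨hz.1, hz.2.trans_le hx.2⟩).hasDerivAt
    · exact cRx.intervalIntegrable_of_Icc hx.1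
  rw [← ftc]
  have h1 := intervalIntegral.abs_integral_le_integral_abs (f := deriv (u t)) (μ := volume) hx.1
  have h2 : ∫ z in (0:ℝ)..x, |deriv (u t) z| ≤ ∫ z in (0:ℝ)..x, (e / 2 * (deriv (u t) z) ^ 2 + 1 / (2 * e)) := by
    apply intervalIntegral.integral_mono_on hx.1 (cRx.abs.intervalIntegrable_of_Icc hx.1)
    · exact (i2x.const_mul _).add intervalIntegrable_const
    · intro z hz
      have : e / 2 * (deriv (u t) z) ^ 2 + 1 / (2 * e) - |deriv (u t) z|
          = (e * |deriv (u t) z| - 1) ^ 2 / (2 * e) := by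
        rw [← sq_abs (deriv (u t) z)]
        field_simp
        ring
      have h3 : 0 ≤ (e * |deriv (u t) z| - 1) ^ 2 / (2 * e) := by positivity
      linarith
  rw [intervalIntegral.integral_add (i2x.const_mul _) intervalIntegrable_const,
    intervalIntegral.integral_const_mul] at h2
  simp only [intervalIntegral.integral_const, smul_eq_mul, sub_zero] at h2
  have h3 : ∫ z in (0:ℝ)..x, (deriv (u t) z) ^ 2 ≤ ∫ z in (0:ℝ)..(s t), (deriv (u t) z) ^ 2 := by
    rw [← intervalIntegral.integral_add_adjacent_intervals i2x i2y]
    have := intervalIntegral.integral_nonneg (μ := volume) (f := fun z => (deriv (u t) z) ^ 2) hx.2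
      fun z _ => sq_nonneg _
    linarith
  have h4 : e / 2 * ∫ z in (0:ℝ)..x, (deriv (u t) z) ^ 2 ≤
    e / 2 * ∫ z in (0:ℝ)..(s t), (deriv (u t) z) ^ 2 := by gcongr
  have h5 : x * (1 / (2 * e)) = x / e / 2 := by field_simp
  linarith

lemma bdry_bound (H : IsGlobalSol p s₀ φ s u) (hp : 1 < p) (hM : 0 < M) (hs : s₀ ≤ M)
    (hs' : 1 / M ≤ s₀) (hφ : ∀ x ∈ Icc 0 s₀, φ x ≤ M) {t : ℝ} (ht : 0 ≤ t) : u t 0 ≤ N1c p M := by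
  by_contra! hcon
  have hτ := tauc_pos (p := p) hM
  have hC1 : 0 < C1c p M := by
    have := Lc_pos (p := p) hM
    unfold C1c; positivity
  have hN0 : 0 < N0c p M := by unfold N0c; positivity
  have hY : 0 < Yc p M := by unfold Yc; positivity
  have hC3 : 0 < C3c p M := by unfold C3c; positivity
  have hgood := H.good_time hp hM hs hφ
  have hN0s : 2 * N0c p M ^ (1 - p) ≤ s₀ := by
    have : N0c p M ^ (1 - p) = (2 * M)⁻¹ := by
      unfold N0c
      rw [← Real.rpow_mul (by positivity), ← Real.rpow_neg_one]
      congr 1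
      have : p - 1 ≠ 0 := by linarith
      field_simp
      ring
    rw [this]
    refine le_trans (le_of_eq ?_) hs'
    field_simp
  have hlow : ∀ τ, 0 < τ → -Yc p M < energy p s u τ := fun τ h => H.energy_lower hp hN0 hN0s h
  have hC3d : C3c p M = 8 / 3 * 4 ^ (3 * p - 1) * (C1c p M + Yc p M) := rfl
  have hN1d : N1c p M =
    1 + 8 * M + 2 * C1c p M + 4 * N0c p M + 100 * (C1c p M + Yc p M + C3c p M) := rfl
  generalize N1c p M = N at *
  generalize C3c p M = C3 at *
  generalize Yc p M = Y at *
  generalize C1c p M = C1 at *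
  generalize N0c p M = N0 at *
  have hshort := H.short hp hM hφ
  generalize tauc p M = τ at *
  have hN1 : 1 ≤ N := by linarith
  have hNpos : 0 < N := by linarith
  have hτt : τ ≤ t := by
    by_contra! h
    linarith [hshort t ⟨ht, h.le⟩]
  obtain ⟨t1, t2, h1, h12, h2t, hf1, hf2, hbd⟩ := crossing (f := fun t => u t 0) (c := N / 4) (d := N) hτt
    (H.u0_cont hτ.le) (by have := hshort τ ⟨hτ.le, le_rfl⟩; linarith) (by linarith) hcon.le
  have ht1 : 0 < t1 := hτ.trans_le h1
  have ht2 : 0 < t2 := ht1.trans_le h12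
  set A := N ^ p with hA
  have hA0 : 0 < A := by positivity
  have hA1 : A * N = N ^ (p + 1) := by rw [Real.rpow_add_one hNpos.ne']
  have hA2 : N ^ (1 - p) = N / A := by rw [Real.rpow_sub hNpos, Real.rpow_one]
  have hA3 : N ^ (3 * p - 1) = A ^ 3 / N := by
    rw [Real.rpow_sub hNpos, Real.rpow_one, hA, ← Real.rpow_natCast, ← Real.rpow_mul hNpos.le]
    push_cast
    rw [mul_comm]
  have hA4 : N ≤ A * N := by
    have : 1 ≤ A := Real.one_le_rpow hN1 (by linarith)
    nlinarith
  have hNs : 2 * (N / 4) ^ (1 - p) ≤ s₀ := by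
    have := Real.rpow_le_rpow_of_nonpos hN0 (show N0 ≤ N / 4 by linarith) (show 1 - p ≤ 0 by linarith)
    linarith
  have hrs : N / (64 * A) ≤ s₀ := by
    have := Real.rpow_le_rpow_of_nonpos hN0 (show N0 ≤ N by linarith) (show 1 - p ≤ 0 by linarith)
    rw [hA2] at this
    have e : N / (64 * A) = N / A / 64 := by field_simp
    have : 0 < N / A := by positivity
    rw [e]; linarith
  set r := N / (64 * A) with hr
  have hr0 : 0 < r := by positivity
  have hdr := H.drop hp ht1 h12 (show 0 < N / 4 by linarith) hNs (fun τ hτ => (hbd τ hτ).1)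
  have hE1 : energy p s u t1 ≤ C1 := (H.energy_anti hp hτ h1).trans hgood
  have hE2 : energy p s u t2 ≤ C1 := (H.energy_anti hp hτ (h1.trans h12)).trans hgood
  have hl2 := hlow t2 ht2
  have h4 : (N / 4) ^ (3 * p - 1) = A ^ 3 / N / 4 ^ (3 * p - 1) := by
    rw [Real.div_rpow hNpos.le (by norm_num), hA3]
  have hT : A ^ 3 / N * (t2 - t1) ≤ C3 := by
    rw [h4] at hdr
    have : 3 / 8 * (A ^ 3 / N / 4 ^ (3 * p - 1)) * (t2 - t1) ≤ C1 + Y := by linarith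
    have h44 : (0:ℝ) < 4 ^ (3 * p - 1) := by positivity
    rw [hC3d]
    calc A ^ 3 / N * (t2 - t1)
        = 8 / 3 * 4 ^ (3 * p - 1) * (3 / 8 * (A ^ 3 / N / 4 ^ (3 * p - 1)) * (t2 - t1)) := by
          field_simp
      _ ≤ _ := by gcongr
  have hosc : ∀ t', 0 < t' → energy p s u t' ≤ C1 → u t' 0 ≤ N → ∀ x ∈ Icc 0 r,
      |u t' x - u t' 0| ≤ 3 / 16 * N := by
    intro t' ht' hE hu x hx
    have h1 := H.osc_bound ht' (x := x) ⟨hx.1, hx.2.trans (hrs.trans (H.s_ge ht'.le))⟩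
      (show 0 < 1 / (8 * A) by positivity)
    have h2 : ∫ z in (0:ℝ)..(s t'), (deriv (u t') z) ^ 2 ≤ 2 * (A * N) := by
      have h3 : u t' 0 ^ (p + 1) ≤ A * N := by
        rw [hA1]; exact Real.rpow_le_rpow (H.u0_nn ht'.le) hu (by linarith)
      have h5 : u t' 0 ^ (p + 1) / (p + 1) ≤ A * N / 2 := by
        have h6 : 0 ≤ u t' 0 ^ (p + 1) := Real.rpow_nonneg (H.u0_nn ht'.le) _
        exact div_le_div₀ (by positivity) h3 (by norm_num) (by linarith)
      unfold energy at hE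
      linarith
    have h3 : x / (1 / (8 * A)) ≤ N / 8 := by
      have : x / (1 / (8 * A)) = 8 * A * x := by field_simp
      rw [this]
      calc 8 * A * x ≤ 8 * A * r := by have := hx.2; gcongr
        _ = N / 8 := by rw [hr]; field_simp; norm_num
    have h4 : 1 / (8 * A) * (∫ z in (0:ℝ)..(s t'), (deriv (u t') z) ^ 2) ≤ N / 4 := by
      calc _ ≤ 1 / (8 * A) * (2 * (A * N)) := by gcongr
        _ = N / 4 := by field_simp; norm_num
    linarith
  have hdiff : ∀ x ∈ Icc 0 r, 3 / 8 * N ≤ u t2 x - u t1 x := by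
    intro x hx
    have a1 := abs_le.1 (hosc t1 ht1 hE1 (by linarith) x hx)
    have a2 := abs_le.1 (hosc t2 ht2 hE2 (by linarith) x hx)
    linarith [a1.2, a2.1]
  have hrs1 : r ≤ s t1 := hrs.trans (H.s_ge ht1.le)
  have hrs2 : r ≤ s t2 := hrs.trans (H.s_ge ht2.le)
  have cu : ∀ t', 0 < t' → r ≤ s t' → ContinuousOn (u t') (Icc 0 r) := fun t' h h' =>
    ((H (t' + 1) (by linarith)).u_slice ⟨h.le, by linarith⟩).mono (Icc_subset_Icc_right h')
  set lam := A ^ 2 / N with hlam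
  have hlam0 : 0 < lam := by positivity
  have hen := H.energy_le hp ht1 h12 hr0.le hrs1 (θ := fun _ => lam) continuous_const
  have hint : r * (lam * (3 / 8 * N)) ≤ ∫ x in (0:ℝ)..r, lam * (u t2 x - u t1 x) := by
    have := intervalIntegral.integral_mono_on (μ := volume) (f := fun _ => lam * (3 / 8 * N))
      (g := fun x => lam * (u t2 x - u t1 x)) hr0.le intervalIntegrable_const
      ((continuousOn_const.mul ((cu t2 ht2 hrs2).sub (cu t1 ht1 hrs1))).intervalIntegrable_of_Icc hr0.le)
      (fun x hx => mul_le_mul_of_nonneg_left (hdiff x hx) hlam0.le)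
    rwa [intervalIntegral.integral_const, smul_eq_mul, sub_zero] at this
  simp only [intervalIntegral.integral_const, smul_eq_mul, sub_zero] at hen
  have f1 : r * (lam * (3 / 8 * N)) = 3 / 512 * (A * N) := by
    rw [hr, hlam]; field_simp; norm_num
  have f2 : (t2 - t1) * (r * lam ^ 2) = A ^ 3 / N * (t2 - t1) / 64 := by
    rw [hr, hlam]; field_simp
  rw [f1] at hint
  rw [f2] at hen
  linarith

end IsGlobalSol

lemma phi_le {s₀ M : ℝ} {φ : ℝ → ℝ} (hW : memW s₀ φ) (h : s₀ + s₀⁻¹ + lipNorm s₀ φ ≤ M) :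
    0 < M ∧ s₀ ≤ M ∧ 1 / M ≤ s₀ ∧ ∀ x ∈ Icc 0 s₀, φ x ≤ M := by
  obtain ⟨h0, ⟨K, hK⟩, -, hn, -⟩ := hW
  have hinv : 0 < s₀⁻¹ := by positivity
  have hbd : BddAbove ((fun x => |φ x|) '' Icc 0 s₀) :=
    (isCompact_Icc.image_of_continuousOn hK.continuousOn.abs).bddAbove
  have hS1 : ∀ x ∈ Icc 0 s₀, |φ x| ≤ sSup ((fun x => |φ x|) '' Icc 0 s₀) := fun x hx =>
    le_csSup hbd ⟨x, hx, rfl⟩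
  have hS2 : 0 ≤ sSup ((fun q : ℝ × ℝ => |φ q.1 - φ q.2| / |q.1 - q.2|) ''
      {q : ℝ × ℝ | q.1 ∈ Icc 0 s₀ ∧ q.2 ∈ Icc 0 s₀ ∧ q.1 ≠ q.2}) := by
    apply Real.sSup_nonneg
    rintro _ ⟨q, -, rfl⟩
    positivity
  have hS0 : 0 ≤ sSup ((fun x => |φ x|) '' Icc 0 s₀) :=
    (abs_nonneg _).trans (hS1 0 ⟨le_rfl, h0.le⟩)
  unfold lipNorm at h
  have hM : 0 < M := by linarith
  refine ⟨hM, by linarith, ?_, ?_⟩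
  · have : s₀⁻¹ ≤ M := by linarith
    rw [one_div]
    exact inv_le_of_inv_le₀ h0 this
  · intro x hx
    linarith [hS1 x hx, le_abs_self (φ x)]

/-- Proposition 4.2: uniform `L^∞` bound for global-in-time solutions with
uniformly bounded initial data. -/
theorem stmt_16 (p : ℝ) (hp : 1 < p) (M : ℝ) (hM : 0 < M) :
    ∃ C : ℝ, 0 < C ∧ ∀ (s₀ : ℝ) (φ : ℝ → ℝ) (s : ℝ → ℝ) (u : ℝ → ℝ → ℝ),
      memW s₀ φ → IsGlobalSol p s₀ φ s u →
      s₀ + s₀⁻¹ + lipNorm s₀ φ ≤ M →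
      ∀ t : ℝ, 0 ≤ t → supNorm s u t ≤ C := by
  have hC1 : N1c p M ≤ |N1c p M| + M := by linarith [le_abs_self (N1c p M)]
  have hC2 : M ≤ |N1c p M| + M := by linarith [abs_nonneg (N1c p M)]
  refine ⟨|N1c p M| + M, by linarith, ?_⟩
  intro s₀ φ s u hW H h t ht
  obtain ⟨-, hs, hs', hφ⟩ := phi_le hW h
  have key := (H (t + 1) (by linarith)).bound_of_bdry (A := |N1c p M| + M) (by linarith)
    (fun x hx => (hφ x hx).trans hC2)
    (fun τ hτ => (H.bdry_bound hp hM hs hs' hφ hτ.1.le).trans hC1) t ⟨ht, by linarith⟩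
  unfold supNorm
  apply csSup_le ((nonempty_Ioo.2 (H.s_pos ht)).image _)
  rintro _ ⟨x, hx, rfl⟩
  exact key x ⟨hx.1.le, hx.2.le⟩
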